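/- arXiv:1512.06691 — 3 statements merged into one kernel-verified Lean document; each statement's English description precedes it below -/
import Mathlib

section
/- Let Y > 0, μ > 0, and let H : ℝ → ℝ be measurable and Y-periodic with constants 0 < H_m ≤ H(y) ≤ H_M for almost every y ∈ ℝ. Then there exist c ∈ ℝ and a Y-periodic function v ∈ W^{2,∞}(ℝ) satisfying −c + H(y)·√(1 + v'(y)²) = μ·v''(y)/(1 + v'(y)²) for almost every y ∈ ℝ, and moreover H_m ≤ c ≤ H_M and sup_y |v'(y)| ≤ √(H_M²/H_m² − 1). -/
open MeasureTheory Real Filter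

/-!
Put `z = sin (arctan v') = v' / √(1 + v'²)`. The equation becomes `z' = H/μ - k √(1 - z²)` with
`k = c/μ`, and periodicity of `v` is the condition `∫₀^Y z / √(1 - z²) = 0`. Two devices make this
accessible to classical ODE theory.

* The function `√(1 - z²)` is replaced by `g = cosClip σ`, which clips `z` to `[-σ, σ]` for some
  `σ < 1`; `g` is Lipschitz with values in `[√(1 - σ²), 1]`.
* With `p t = ∫₀ᵗ H/μ`, the function `u = z - p` solves `u' = -k g (u + p)`. This right-hand side is
  continuous in `t` although `H` is only measurable, so Picard-Lindelöf and Grönwall apply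
  (`IsFrontSol.exists_sol`, `IsFrontSol.abs_sub_le`).

The solution is found by shooting. For each initial value `a`, the intermediate value theorem in `k`
gives `k = κ a` with `z Y = z 0` (`IsFrontSol.exists_speed`). Solutions with the same initial value
and different `k` separate at a linear rate (`IsFrontSol.separation`), so `κ` is Lipschitz, and a
second application of the intermediate value theorem, in `a`, gives `∫₀^Y φ (z) = 0` for
`φ = slopeClip σ / g` (`IsFrontSol.exists_shoot`). The solution extends periodically to `ℝ`
(`IsFrontSol.exists_periodic`).

The bounds come from a crossing argument: a continuous periodic function cannot cross a level always
in the same direction, hence `z` avoids every level `ℓ` with `k g(ℓ) > HM/μ` or `k g(ℓ) < Hm/μ`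
(`ne_level_of_speed`). Since `z` vanishes somewhere and `g 0 = 1`, the first alternative at `ℓ = 0`
gives `c ≤ HM`. The second one then gives `g (z) ≥ Hm/HM`, which is the slope bound and also shows
that the clipping is inactive along the solution.
-/

open Set Topology NNReal

/-! ### The shooting problem -/

/-- `u` solves `u' = -k g(u + p)` on `[0, Y]` (one-sided derivatives at the end points) with
`u 0 = a`. In terms of `z = u + p` this is the integrated form of `z' = p' - k g(z)`. -/
def IsFrontSol (g p : ℝ → ℝ) (Y k a : ℝ) (u : ℝ → ℝ) : Prop :=
  u 0 = a ∧ ∀ t ∈ Icc 0 Y, HasDerivWithinAt u (-k * g (u t + p t)) (Icc 0 Y) t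

namespace IsFrontSol

variable {g p u u₁ u₂ : ℝ → ℝ} {Y k k₁ k₂ a a₁ a₂ γ K : ℝ} {L : ℝ≥0}

/-- Picard-Lindelöf covers all of `[0, Y]` in one step because the vector field is bounded by
`|k|`. -/
lemma exists_sol (hg : LipschitzWith L g) (hg1 : ∀ x, |g x| ≤ 1) (hp : Continuous p)
    (hY : 0 < Y) (k a : ℝ) : ∃ u, IsFrontSol g p Y k a u := by
  have hPL : IsPicardLindelof (fun t x => -k * g (x + p t))
      (⟨0, ⟨le_rfl, hY.le⟩⟩ : Icc (0 : ℝ) Y) a (‖k‖₊ * Y.toNNReal) 0 ‖k‖₊ (‖k‖₊ * L) := by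
    refine ⟨fun t _ => LipschitzWith.lipschitzOnWith ?_, fun x _ => ?_, fun t _ x _ => ?_, ?_⟩
    · refine LipschitzWith.of_dist_le_mul fun x y => ?_
      have := hg.dist_le_mul (x + p t) (y + p t)
      rw [dist_add_right] at this
      rw [Real.dist_eq, ← mul_sub, abs_mul, abs_neg, ← Real.dist_eq]
      push_cast
      rw [Real.norm_eq_abs, mul_assoc]
      gcongr
    · have := hg.continuous
      fun_prop
    · rw [norm_mul, norm_neg, coe_nnnorm]
      exact mul_le_of_le_one_right (norm_nonneg _) (hg1 _)
    · simp [hY.le]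
  obtain ⟨u, hu0, hu⟩ := hPL.exists_eq_forall_mem_Icc_hasDerivWithinAt₀
  exact ⟨u, hu0, hu⟩

lemma continuousOn (h : IsFrontSol g p Y k a u) : ContinuousOn u (Icc 0 Y) :=
  fun t ht => (h.2 t ht).continuousWithinAt

lemma hasDerivWithinAt_Ici (h : IsFrontSol g p Y k a u) {t : ℝ} (ht : t ∈ Ico 0 Y) :
    HasDerivWithinAt u (-k * g (u t + p t)) (Ici t) t :=
  (h.2 t (Ico_subset_Icc_self ht)).mono_of_mem_nhdsWithin <|
    Filter.mem_of_superset (Icc_mem_nhdsGE ht.2) (Icc_subset_Icc_left ht.1)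

/-- Lipschitz dependence on the initial value and on `k`. The second solution is treated as an
approximate solution, with error `|k₁ - k₂|`, of the equation for the first one, and Grönwall's
inequality is applied with the constant `K L + 1 ≥ 1`, which avoids a division by zero. -/
lemma abs_sub_le (hg : LipschitzWith L g) (hg1 : ∀ x, |g x| ≤ 1)
    (h₁ : IsFrontSol g p Y k₁ a₁ u₁) (h₂ : IsFrontSol g p Y k₂ a₂ u₂)
    (hk : |k₁| ≤ K) {t : ℝ} (ht : t ∈ Icc 0 Y) :
    |u₁ t - u₂ t| ≤ (|a₁ - a₂| + |k₁ - k₂|) * exp ((K * L + 1) * Y) := by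
  have hK : 0 ≤ K := (abs_nonneg _).trans hk
  set Λ : ℝ≥0 := K.toNNReal * L + 1 with hΛ
  have hΛ' : (Λ : ℝ) = K * L + 1 := by simp [hΛ, hK]
  have hΛ1 : (1 : ℝ) ≤ Λ := by rw [hΛ']; have : 0 ≤ K * L := by positivity
                               linarith
  have key := dist_le_of_approx_trajectories_ODE (v := fun t x => -k₁ * g (x + p t)) (K := Λ)
    (f := u₁) (g := u₂) (a := 0) (b := Y) (εf := 0) (εg := |k₁ - k₂|) (δ := |a₁ - a₂|)
    (fun t => by
      refine LipschitzWith.of_dist_le_mul fun x y => ?_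
      have := hg.dist_le_mul (x + p t) (y + p t)
      rw [dist_add_right] at this
      rw [Real.dist_eq, ← mul_sub, abs_mul, abs_neg, ← Real.dist_eq, hΛ']
      calc |k₁| * dist (g (x + p t)) (g (y + p t)) ≤ K * (L * dist x y) := by gcongr
        _ ≤ (K * L + 1) * dist x y := by nlinarith [dist_nonneg (x := x) (y := y)])
    h₁.continuousOn (fun t ht => h₁.hasDerivWithinAt_Ici ht) (fun t _ => by simp)
    h₂.continuousOn (fun t ht => h₂.hasDerivWithinAt_Ici ht)
    (fun t _ => by
      rw [Real.dist_eq, ← sub_mul, abs_mul, show -k₂ - -k₁ = k₁ - k₂ by ring]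
      exact mul_le_of_le_one_right (abs_nonneg _) (hg1 _))
    (by rw [h₁.1, h₂.1, Real.dist_eq]) t ht
  rw [Real.dist_eq, gronwallBound_of_K_ne_0 (by positivity)] at key
  refine key.trans ?_
  simp only [sub_zero, zero_add]
  have hE : exp (Λ * t) ≤ exp ((K * L + 1) * Y) := by
    rw [← hΛ']; gcongr; exact ht.2
  have h3 : |k₁ - k₂| / Λ * (exp (Λ * t) - 1) ≤ |k₁ - k₂| * exp (Λ * t) := by
    have hE1 : 1 ≤ exp (Λ * t) := one_le_exp (mul_nonneg Λ.2 ht.1)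
    have := div_le_self (abs_nonneg (k₁ - k₂)) hΛ1
    gcongr
    linarith
  calc _ ≤ (|a₁ - a₂| + |k₁ - k₂|) * exp (Λ * t) := by linarith
    _ ≤ _ := by gcongr

/-- Quantitative strict monotonicity in `k` of the end value `u Y`. -/
lemma separation (hg : LipschitzWith L g) (hγ : 0 < γ) (hgγ : ∀ x, γ ≤ g x) (hg1 : ∀ x, |g x| ≤ 1)
    (hY : 0 < Y) (h₁ : IsFrontSol g p Y k₁ a u₁) (h₂ : IsFrontSol g p Y k₂ a u₂)
    (hk₁ : 0 ≤ k₁) (hkK : k₁ ≤ K) (hk : k₁ ≤ k₂) :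
    γ * Y / (2 + K * L * Y) * (k₂ - k₁) ≤ u₁ Y - u₂ Y := by
  rcases hk.eq_or_lt with rfl | hlt
  · have := abs_sub_le (K := K) hg hg1 h₁ h₂ (abs_le.2 ⟨by linarith, hkK⟩) (right_mem_Icc.2 hY.le)
    simp only [sub_self, abs_zero, add_zero, zero_mul, mul_zero] at this ⊢
    exact (abs_nonpos_iff.1 this).ge
  have hK : 0 ≤ K := hk₁.trans hkK
  have hden : 0 < 2 + K * L * Y := by positivity
  -- `δ` is small enough that `u₂ t + δ t` is a strict subsolution wherever it touches `u₁`: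
  -- there the difference of slopes is at least `(k₂ - k₁) γ - K L δ Y > δ`.
  set δ := γ * (k₂ - k₁) / (2 + K * L * Y) with hδ
  have hδ0 : 0 < δ := div_pos (mul_pos hγ (sub_pos.2 hlt)) hden
  have hδeq : δ * (2 + K * L * Y) = γ * (k₂ - k₁) := div_mul_cancel₀ _ hden.ne'
  have key := image_le_of_deriv_right_lt_deriv_boundary' (a := 0) (b := Y)
    (f := fun t => u₂ t + δ * t) (f' := fun t => -k₂ * g (u₂ t + p t) + δ * 1)
    (B := u₁) (B' := fun t => -k₁ * g (u₁ t + p t))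
    (h₂.continuousOn.add (by fun_prop))
    (fun t ht => (h₂.hasDerivWithinAt_Ici ht).add ((hasDerivWithinAt_id t _).const_mul δ))
    (by simp [h₁.1, h₂.1]) h₁.continuousOn (fun t ht => h₁.hasDerivWithinAt_Ici ht)
    (fun t ht heq => by
      have hl := hg.dist_le_mul (u₁ t + p t) (u₂ t + p t)
      rw [dist_add_right, Real.dist_eq, Real.dist_eq, ← heq, add_sub_cancel_left,
        abs_of_nonneg (mul_nonneg hδ0.le ht.1), heq] at hl
      have h5 : k₁ * (g (u₁ t + p t) - g (u₂ t + p t)) ≤ K * (L * (δ * Y)) := by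
        calc _ ≤ k₁ * (L * (δ * t)) := by gcongr; exact (le_abs_self _).trans hl
          _ ≤ _ := by gcongr; exact mul_nonneg L.2 (mul_nonneg hδ0.le ht.1)
                      exact ht.2.le
      have h6 := mul_le_mul_of_nonneg_left (hgγ (u₂ t + p t)) (sub_pos.2 hlt).le
      nlinarith)
    (right_mem_Icc.2 hY.le)
  have : γ * Y / (2 + K * L * Y) * (k₂ - k₁) = δ * Y := by rw [hδ]; ring
  linarith

/-- Every initial value `a` admits a `k` for which `z = u + p` satisfies `z Y = a`, and which is
bounded independently of `a`: the end value is too large for `k = 0` and too small for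
`k = p Y / (γ Y)`. -/
lemma exists_speed (hg : LipschitzWith L g) (hγ : 0 < γ) (hgγ : ∀ x, γ ≤ g x)
    (hg1 : ∀ x, g x ≤ 1) (hp : Continuous p) (hY : 0 < Y) (hpY : 0 ≤ p Y) (a : ℝ) :
    ∃ k ∈ Icc 0 (p Y / (γ * Y)), ∃ u, IsFrontSol g p Y k a u ∧ u Y + p Y = a := by
  have hga : ∀ x, |g x| ≤ 1 := fun x => abs_le.2 ⟨by linarith [hgγ x], hg1 x⟩
  choose u hu using exists_sol hg hga hp hY (a := a)
  set K := p Y / (γ * Y)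
  have hK : 0 ≤ K := by positivity
  have hcont : ContinuousOn (fun k => u k Y) (Icc 0 K) := by
    refine (LipschitzOnWith.of_dist_le_mul (K := (exp ((K * L + 1) * Y)).toNNReal)
      fun x hx y hy => ?_).continuousOn
    have := abs_sub_le (K := K) hg hga (hu x) (hu y) (abs_le.2 ⟨by linarith [hx.1], hx.2⟩)
      (right_mem_Icc.2 hY.le)
    rw [Real.coe_toNNReal _ (exp_pos _).le, Real.dist_eq, Real.dist_eq, mul_comm]
    simpa using this
  have h0 : a ≤ u 0 Y := by
    have := image_le_of_deriv_right_le_deriv_boundary (a := 0) (b := Y)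
      (f := fun _ => a) (f' := fun _ => 0) (B := u 0) (B' := fun t => -0 * g (u 0 t + p t))
      continuousOn_const (fun t _ => hasDerivWithinAt_const _ _ _) (hu 0).1.ge
      (hu 0).continuousOn (fun t ht => (hu 0).hasDerivWithinAt_Ici ht) (fun t _ => by simp)
      (right_mem_Icc.2 hY.le)
    exact this
  have h1 : u K Y ≤ a - p Y := by
    have := image_le_of_deriv_right_le_deriv_boundary (a := 0) (b := Y)
      (f := u K) (f' := fun t => -K * g (u K t + p t)) (B := fun t => a + -(K * γ) * t)
      (B' := fun t => -(K * γ) * 1)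
      (hu K).continuousOn (fun t ht => (hu K).hasDerivWithinAt_Ici ht) (by simp [(hu K).1])
      (by fun_prop) (fun t _ => ((hasDerivWithinAt_id t _).const_mul _).const_add a)
      (fun t _ => by nlinarith [hgγ (u K t + p t)])
      (right_mem_Icc.2 hY.le)
    have h2 : K * γ * Y = p Y := by simp only [K]; field_simp
    linarith
  obtain ⟨k, hk, hkY⟩ := intermediate_value_Icc' hK hcont
    (show a - p Y ∈ Icc (u K Y) (u 0 Y) from ⟨h1, by linarith⟩)
  exact ⟨k, hk, u k, hu k, by simp only at hkY; linarith⟩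


lemma le_init (h : IsFrontSol g p Y k a u) (hk : 0 ≤ k) (hg0 : ∀ x, 0 ≤ g x) {t : ℝ}
    (ht : t ∈ Icc 0 Y) : u t ≤ a :=
  image_le_of_deriv_right_le_deriv_boundary (a := 0) (b := Y) (B := fun _ => a)
    (B' := fun _ => 0) h.continuousOn (fun _ ht => h.hasDerivWithinAt_Ici ht) h.1.le
    continuousOn_const (fun _ _ => hasDerivWithinAt_const _ _ _)
    (fun t _ => by nlinarith [mul_nonneg hk (hg0 (u t + p t))]) ht

lemma init_sub_le (h : IsFrontSol g p Y k a u) (hk : 0 ≤ k) (hg1 : ∀ x, g x ≤ 1) {t : ℝ}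
    (ht : t ∈ Icc 0 Y) : a - k * t ≤ u t := by
  have := image_le_of_deriv_right_le_deriv_boundary (a := 0) (b := Y)
    (f := fun t => a + -k * t) (f' := fun _ => -k * 1)
    (by fun_prop) (fun t _ => ((hasDerivWithinAt_id t _).const_mul _).const_add a) (by simp [h.1])
    h.continuousOn (fun _ ht => h.hasDerivWithinAt_Ici ht)
    (fun t _ => by nlinarith [hg1 (u t + p t)]) ht
  linarith

/-- For a suitable initial value and a suitable `k ≥ 0`, the function `z = u + p` takes the same
value at `0` and `Y` and `φ ∘ z` has mean zero. -/
lemma exists_shoot {φ : ℝ → ℝ} {B : ℝ} (hg : LipschitzWith L g) (hγ : 0 < γ)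
    (hgγ : ∀ x, γ ≤ g x) (hg1 : ∀ x, g x ≤ 1) (hp : Continuous p) (hY : 0 < Y)
    (hp0 : ∀ t ∈ Icc 0 Y, 0 ≤ p t) (hpY : ∀ t ∈ Icc 0 Y, p t ≤ p Y)
    (hφ : Continuous φ) (hφB : ∀ x, |φ x| ≤ B) (hφ0 : ∀ x, 0 ≤ x → 0 ≤ φ x)
    (hφ0' : ∀ x, x ≤ 0 → φ x ≤ 0) :
    ∃ k a u, 0 ≤ k ∧ IsFrontSol g p Y k a u ∧ u Y + p Y = a ∧
      ∫ t in 0..Y, φ (u t + p t) = 0 := by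
  have hga : ∀ x, |g x| ≤ 1 := fun x => abs_le.2 ⟨by linarith [hgγ x], hg1 x⟩
  have hYm : Y ∈ Icc 0 Y := right_mem_Icc.2 hY.le
  choose κ hκ u hu huY using exists_speed hg hγ hgγ hg1 hp hY (hp0 Y hYm)
  set K := p Y / (γ * Y)
  have hK : 0 ≤ K := (hκ 0).1.trans (hκ 0).2
  set E := exp ((K * L + 1) * Y)
  set m := γ * Y / (2 + K * L * Y)
  have hm : 0 < m := by positivity
  have hκabs : ∀ a, |κ a| ≤ K := fun a => abs_le.2 ⟨by linarith [(hκ a).1], (hκ a).2⟩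
  -- Compare the solution from `a'` with parameter `κ a` both to `u a'` (same initial value) and to
  -- `u a` (same parameter).
  have hκL' : ∀ a a', κ a ≤ κ a' → m * |κ a - κ a'| ≤ (E + 1) * |a - a'| := by
    intro a a' hle
    obtain ⟨w, hw⟩ := exists_sol hg hga hp hY (κ a) a'
    have h1 := separation hg hγ hgγ hga hY hw (hu a') (hκ a).1 (hκ a).2 hle
    have h2 := abs_sub_le hg hga hw (hu a) (hκabs a) hYm
    rw [sub_self, abs_zero, add_zero, abs_sub_comm a'] at h2
    rw [abs_sub_comm, abs_of_nonneg (sub_nonneg.2 hle)]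
    have h3 := le_abs_self (w Y - u a Y)
    have h4 := le_abs_self (a - a')
    have h5 := huY a
    have h6 := huY a'
    calc m * (κ a' - κ a) ≤ w Y - u a' Y := h1
      _ ≤ |a - a'| * E + |a - a'| := by linarith
      _ = _ := by ring
  have hκL : ∀ a a', |κ a - κ a'| ≤ (E + 1) / m * |a - a'| := by
    intro a a'
    rw [div_mul_eq_mul_div, le_div_iff₀ hm, mul_comm]
    rcases le_total (κ a) (κ a') with h | h
    · exact hκL' a a' h
    · rw [abs_sub_comm, abs_sub_comm a]; exact hκL' a' a h
  have huc : ∀ t ∈ Icc 0 Y, Continuous fun a => u a t := by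
    intro t ht
    refine (LipschitzWith.of_dist_le_mul (K := ((1 + (E + 1) / m) * E).toNNReal)
      fun a a' => ?_).continuous
    rw [Real.coe_toNNReal _ (by positivity), Real.dist_eq, Real.dist_eq]
    calc |u a t - u a' t| ≤ (|a - a'| + |κ a - κ a'|) * E :=
          abs_sub_le hg hga (hu a) (hu a') (hκabs a) ht
      _ ≤ (|a - a'| + (E + 1) / m * |a - a'|) * E := by
          have := hκL a a'
          gcongr
      _ = _ := by ring
  have hzc : ∀ a, ContinuousOn (fun t => φ (u a t + p t)) (Icc 0 Y) := fun a =>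
    hφ.comp_continuousOn ((hu a).continuousOn.add hp.continuousOn)
  have hM : Continuous fun a => ∫ t in 0..Y, φ (u a t + p t) := by
    refine intervalIntegral.continuous_of_dominated_interval (bound := fun _ => B) ?_ ?_ ?_ ?_
    · intro a
      rw [uIoc_of_le hY.le]
      exact ((hzc a).mono Ioc_subset_Icc_self).aestronglyMeasurable measurableSet_Ioc
    · exact fun a => .of_forall fun t _ => hφB _
    · exact intervalIntegrable_const
    · refine .of_forall fun t ht => ?_
      rw [uIoc_of_le hY.le] at ht
      have := huc t (Ioc_subset_Icc_self ht)
      fun_prop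
  obtain ⟨a, ha⟩ : (0 : ℝ) ∈ range fun a => ∫ t in 0..Y, φ (u a t + p t) := by
    -- Starting from `-p Y` gives `z ≤ 0` on `[0, Y]`; starting from `K Y` gives `z ≥ 0`.
    refine mem_range_of_exists_le_of_exists_ge hM ⟨-p Y, ?_⟩ ⟨K * Y, ?_⟩
    · rw [← neg_nonneg, ← intervalIntegral.integral_neg]
      refine intervalIntegral.integral_nonneg hY.le fun t ht => neg_nonneg.2 (hφ0' _ ?_)
      have h1 := (hu (-p Y)).le_init (hκ _).1 (fun x => hγ.le.trans (hgγ x)) ht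
      linarith [hpY t ht]
    · refine intervalIntegral.integral_nonneg hY.le fun t ht => hφ0 _ ?_
      have h1 := (hu (K * Y)).init_sub_le (hκ _).1 hg1 ht
      have h2 : κ (K * Y) * t ≤ K * Y := mul_le_mul (hκ _).2 ht.2 ht.1 hK
      linarith [hp0 t ht]
  exact ⟨κ a, a, u a, (hκ a).1, hu a, huY a, ha⟩

/-- A solution on `[0, Y]` with `z 0 = z Y` extends to `ℝ` with `z` periodic: integrate the
right-hand side evaluated along the periodic extension of `z`. -/
lemma exists_periodic (hg : Continuous g) (hp : Continuous p) (hp0 : p 0 = 0)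
    (hpY : ∀ t, p (t + Y) = p t + p Y) (hY : 0 < Y)
    (h : IsFrontSol g p Y k a u) (hu : u Y + p Y = a) :
    ∃ U : ℝ → ℝ, (∀ t, HasDerivAt U (-k * g (U t + p t)) t) ∧
      Function.Periodic (fun t => U t + p t) Y ∧ EqOn U u (Icc 0 Y) := by
  have : Fact (0 < Y) := ⟨hY⟩
  set z : ℝ → ℝ := fun t => u t + p t with hz
  have hzc : ContinuousOn z (Icc 0 Y) := h.continuousOn.add hp.continuousOn
  have hz0 : z 0 = z Y := by simp [hz, h.1, hp0, hu]
  set ζ : ℝ → ℝ := fun t => AddCircle.liftIco Y 0 z (t : AddCircle Y) with hζ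
  have hζc : Continuous ζ :=
    (AddCircle.liftIco_zero_continuous hz0 hzc).comp (AddCircle.continuous_mk' Y)
  have hζp : Function.Periodic ζ Y := fun t => by simp [hζ]
  have hζI : EqOn ζ z (Icc 0 Y) := by
    intro t ht
    rcases ht.2.eq_or_lt with rfl | hlt
    · rw [← hz0, ← zero_add t, hζp]
      exact AddCircle.liftIco_zero_coe_apply ⟨le_rfl, hY⟩
    · exact AddCircle.liftIco_zero_coe_apply ⟨ht.1, hlt⟩
  set G : ℝ → ℝ := fun t => -k * g (ζ t) with hG
  have hGc : Continuous G := by fun_prop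
  have hGp : Function.Periodic G Y := fun t => by simp only [hG, hζp t]
  set U : ℝ → ℝ := fun t => a + ∫ s in 0..t, G s with hU
  have hUd : ∀ t, HasDerivAt U (G t) t := fun t =>
    (intervalIntegral.integral_hasDerivAt_right (hGc.intervalIntegrable _ _)
      (hGc.stronglyMeasurableAtFilter _ _) hGc.continuousAt).const_add a
  have hUu : EqOn U u (Icc 0 Y) := by
    intro t ht
    have := intervalIntegral.integral_eq_sub_of_hasDeriv_right_of_le (a := 0) (b := t) (f := u)
      (f' := G) ht.1 (h.continuousOn.mono (Icc_subset_Icc_right ht.2))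
      (fun s hs => by
        have hsI : s ∈ Ico 0 Y := ⟨hs.1.le, hs.2.trans_le ht.2⟩
        simp only [hG, hζI (Ico_subset_Icc_self hsI)]
        exact (h.hasDerivWithinAt_Ici hsI).mono Ioi_subset_Ici_self)
      (hGc.intervalIntegrable _ _)
    simp only [hU, this, h.1]
    ring
  have hUY : ∀ t, U (t + Y) = U t - p Y := by
    intro t
    have h1 : U (t + Y) = U t + ∫ s in t..t + Y, G s := by
      simp only [hU]
      rw [add_assoc, intervalIntegral.integral_add_adjacent_intervals] <;>
        exact hGc.intervalIntegrable _ _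
    have h2 := hGp.intervalIntegral_add_eq t 0
    have h3 : U Y = a + ∫ s in 0..Y, G s := rfl
    rw [hUu (right_mem_Icc.2 hY.le)] at h3
    rw [zero_add] at h2
    linarith
  have hZp : Function.Periodic (fun t => U t + p t) Y := fun t => by
    simp only [hUY, hpY]; ring
  have hZζ : ∀ t, U t + p t = ζ t := by
    intro t
    obtain ⟨s, hs, hst⟩ := hZp.sub hζp |>.exists_mem_Ico₀ hY t
    simp only [Pi.sub_apply, hUu (Ico_subset_Icc_self hs), hζI (Ico_subset_Icc_self hs), hz,
      sub_self] at hst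
    linarith
  exact ⟨U, fun t => by rw [hZζ]; exact hUd t, hZp, hUu⟩

end IsFrontSol

/-! ### Levels a periodic solution cannot reach -/

/-- A continuous periodic function that crosses the level `ℓ` only downwards never takes the
value `ℓ`. -/
lemma Function.Periodic.ne_level {z : ℝ → ℝ} {Y ℓ : ℝ} (hz : Continuous z)
    (hper : Function.Periodic z Y) (hY : 0 < Y)
    (hr : ∀ t, z t = ℓ → ∀ᶠ s in 𝓝[>] t, z s < ℓ)
    (hl : ∀ t, z t = ℓ → ∀ᶠ s in 𝓝[<] t, ℓ < z s) (t : ℝ) : z t ≠ ℓ := by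
  intro ht
  obtain ⟨b, hzb, htb, hbY⟩ :=
    ((hr t ht).and (Ioo_mem_nhdsGT (show t < t + Y by linarith))).exists
  -- `b` lies just after `t`; the first return to `[ℓ, ∞)` after `b` would be an upward crossing.
  have hcl : IsCompact (Icc b (t + Y) ∩ z ⁻¹' Ici ℓ) :=
    isCompact_Icc.inter_right (isClosed_Ici.preimage hz)
  obtain ⟨c, ⟨hcI, hcℓ⟩, hmin⟩ := hcl.exists_isLeast
    ⟨t + Y, right_mem_Icc.2 hbY.le, by simp [hper t, ht]⟩
  have hbc : b < c := lt_of_le_of_ne hcI.1 fun h => by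
    rw [← h] at hcℓ; exact absurd hcℓ (not_le.2 hzb)
  have hlt : ∀ᶠ s in 𝓝[<] c, z s < ℓ := by
    filter_upwards [Ioo_mem_nhdsLT hbc] with s hs
    by_contra! hge
    exact absurd (hmin ⟨⟨hs.1.le, hs.2.le.trans hcI.2⟩, hge⟩) (not_le.2 hs.2)
  have hcle : z c ≤ ℓ :=
    le_of_tendsto (hz.continuousAt.tendsto.mono_left nhdsWithin_le_nhds) (hlt.mono fun _ => le_of_lt)
  obtain ⟨s, h1, h2⟩ := (hlt.and (hl c (le_antisymm hcle hcℓ))).exists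
  exact lt_asymm h1 h2

lemma HasDerivAt.eventually_lt_of_neg {f : ℝ → ℝ} {f' t : ℝ} (h : HasDerivAt f f' t)
    (hf' : f' < 0) : (∀ᶠ s in 𝓝[>] t, f s < f t) ∧ ∀ᶠ s in 𝓝[<] t, f t < f s := by
  have hs := (hasDerivAt_iff_tendsto_slope.1 h).eventually (gt_mem_nhds hf')
  constructor
  · filter_upwards [hs.filter_mono (nhdsWithin_mono t fun s hs => ne_of_gt hs),
      self_mem_nhdsWithin] with s h1 h2
    rw [slope_def_field, div_neg_iff] at h1
    rcases h1 with h1 | h1 <;> linarith [mem_Ioi.1 h2]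
  · filter_upwards [hs.filter_mono (nhdsWithin_mono t fun s hs => ne_of_lt hs),
      self_mem_nhdsWithin] with s h1 h2
    rw [slope_def_field, div_neg_iff] at h1
    rcases h1 with h1 | h1 <;> linarith [mem_Iio.1 h2]

/-- At a level `ℓ` with `k g(ℓ) > h₁` or `k g(ℓ) < h₀`, where `h₀ ≤ p' ≤ h₁` in the integrated
sense, `z = U + p` is strictly decreasing, respectively strictly increasing, so that it cannot
be periodic and reach `ℓ`. -/
lemma ne_level_of_speed {U p g : ℝ → ℝ} {Y k h₀ h₁ ℓ : ℝ} (hY : 0 < Y)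
    (hU : ∀ t, HasDerivAt U (-k * g (U t + p t)) t) (hp : Continuous p)
    (hper : Function.Periodic (fun t => U t + p t) Y)
    (hp₀ : ∀ s t, s ≤ t → h₀ * (t - s) ≤ p t - p s)
    (hp₁ : ∀ s t, s ≤ t → p t - p s ≤ h₁ * (t - s))
    (hℓ : h₁ < k * g ℓ ∨ k * g ℓ < h₀) (t : ℝ) : U t + p t ≠ ℓ := by
  have hUc : Continuous U := continuous_iff_continuousAt.2 fun t => (hU t).continuousAt
  rcases hℓ with hℓ | hℓ
  · have key : ∀ t, U t + p t = ℓ → _ := fun t ht =>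
      ((hU t).add ((hasDerivAt_id t).const_mul h₁)).eventually_lt_of_neg (by rw [ht]; linarith)
    refine hper.ne_level (hUc.add hp) hY (fun t ht => ?_) (fun t ht => ?_) t
    · filter_upwards [(key t ht).1, self_mem_nhdsWithin] with s h1 h2
      have := hp₁ t s (le_of_lt h2)
      simp only [Pi.add_apply, id] at h1 ht ⊢
      linarith
    · filter_upwards [(key t ht).2, self_mem_nhdsWithin] with s h1 h2
      have := hp₁ s t (le_of_lt h2)
      simp only [Pi.add_apply, id] at h1 ht ⊢
      linarith
  · have key : ∀ t, U t + p t = ℓ → _ := fun t ht =>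
      ((hU t).add ((hasDerivAt_id t).const_mul h₀)).neg.eventually_lt_of_neg (by rw [ht]; linarith)
    have := Function.Periodic.ne_level (z := fun t => -(U t + p t)) (ℓ := -ℓ) (hUc.add hp).neg
      (fun t => congrArg Neg.neg (hper t)) hY (fun t ht => ?_) (fun t ht => ?_) t
    · exact fun h => this (congrArg Neg.neg h)
    · filter_upwards [(key t (neg_injective ht)).1, self_mem_nhdsWithin] with s h1 h2
      have := hp₀ t s (le_of_lt h2)
      simp only [Pi.add_apply, Pi.neg_apply, id] at h1
      linarith
    · filter_upwards [(key t (neg_injective ht)).2, self_mem_nhdsWithin] with s h1 h2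
      have := hp₀ s t (le_of_lt h2)
      simp only [Pi.add_apply, Pi.neg_apply, id] at h1
      linarith

/-! ### The clipped nonlinearity -/

/-- The projection of `x` onto `[-σ, σ]` (for `σ ≥ 0`). -/
noncomputable def slopeClip (σ x : ℝ) : ℝ := max (-σ) (min σ x)

/-- The function `√(1 - x²)`, with `x` clipped to `[-σ, σ]`. If `x` is the sine of an angle in
`(-π/2, π/2)` and `|x| ≤ σ`, this is the cosine of that angle, and `slopeClip σ x / cosClip σ x` is
its tangent. -/
noncomputable def cosClip (σ x : ℝ) : ℝ := √(1 - slopeClip σ x ^ 2)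

section clip

variable {σ x : ℝ}

lemma abs_slopeClip_le (hσ : 0 ≤ σ) (x : ℝ) : |slopeClip σ x| ≤ σ := by
  rw [abs_le]; exact ⟨le_max_left _ _, max_le (by linarith) (min_le_left _ _)⟩

lemma slopeClip_of_abs_le (h : |x| ≤ σ) : slopeClip σ x = x := by
  rw [abs_le] at h
  rw [slopeClip, min_eq_right h.2, max_eq_right h.1]

lemma lipschitzWith_slopeClip (σ : ℝ) : LipschitzWith 1 (slopeClip σ) :=
  (LipschitzWith.id.const_min σ).const_max (-σ)

lemma slopeClip_nonneg (hσ : 0 ≤ σ) (hx : 0 ≤ x) : 0 ≤ slopeClip σ x :=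
  le_max_of_le_right (le_min hσ hx)

lemma slopeClip_nonpos (hσ : 0 ≤ σ) (hx : x ≤ 0) : slopeClip σ x ≤ 0 :=
  max_le (by linarith) (min_le_of_right_le hx)

lemma cosClip_le_one (σ x : ℝ) : cosClip σ x ≤ 1 := by
  refine Real.sqrt_le_one.2 ?_
  linarith [sq_nonneg (slopeClip σ x)]

lemma slopeClip_sq_le (hσ : 0 ≤ σ) (x : ℝ) : slopeClip σ x ^ 2 ≤ σ ^ 2 :=
  sq_le_sq' (by linarith [(abs_le.1 (abs_slopeClip_le hσ x)).1])
    ((abs_le.1 (abs_slopeClip_le hσ x)).2)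

lemma sqrt_le_cosClip (hσ : 0 ≤ σ) (x : ℝ) : √(1 - σ ^ 2) ≤ cosClip σ x :=
  sqrt_le_sqrt (by linarith [slopeClip_sq_le hσ x])

lemma cosClip_pos (hσ : 0 ≤ σ) (hσ1 : σ < 1) (x : ℝ) : 0 < cosClip σ x :=
  (Real.sqrt_pos.2 (by nlinarith)).trans_le (sqrt_le_cosClip hσ x)

lemma cosClip_sq (hσ : 0 ≤ σ) (hσ1 : σ < 1) (x : ℝ) :
    cosClip σ x ^ 2 = 1 - slopeClip σ x ^ 2 :=
  sq_sqrt (by nlinarith [slopeClip_sq_le hσ x])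

lemma lipschitzWith_cosClip (hσ : 0 ≤ σ) (hσ1 : σ < 1) :
    LipschitzWith (1 / √(1 - σ ^ 2)).toNNReal (cosClip σ) := by
  refine LipschitzWith.of_dist_le_mul fun x y => ?_
  have hγ : 0 < √(1 - σ ^ 2) := Real.sqrt_pos.2 (by nlinarith)
  rw [Real.coe_toNNReal _ (by positivity), div_mul_eq_mul_div, one_mul, le_div_iff₀ hγ]
  have h1 := sqrt_le_cosClip hσ x
  have h2 := sqrt_le_cosClip hσ y
  have h3 := (lipschitzWith_slopeClip σ).dist_le_mul x y
  rw [NNReal.coe_one, one_mul, Real.dist_eq] at h3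
  have h4 : |cosClip σ x - cosClip σ y| * (cosClip σ x + cosClip σ y) =
      |slopeClip σ x - slopeClip σ y| * |slopeClip σ x + slopeClip σ y| := by
    rw [← abs_of_pos (add_pos (cosClip_pos hσ hσ1 x) (cosClip_pos hσ hσ1 y)), ← abs_mul,
      ← abs_mul, ← abs_neg]
    congr 1
    linear_combination cosClip_sq hσ hσ1 y - cosClip_sq hσ hσ1 x
  have h5 : |slopeClip σ x + slopeClip σ y| ≤ 2 := by
    refine (abs_add_le _ _).trans ?_
    linarith [abs_slopeClip_le hσ x, abs_slopeClip_le hσ y]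
  rw [Real.dist_eq (cosClip σ x)]
  have h6 : 2 * √(1 - σ ^ 2) ≤ cosClip σ x + cosClip σ y := by linarith
  have h7 := mul_le_mul_of_nonneg_left h6 (abs_nonneg (cosClip σ x - cosClip σ y))
  have h8 := mul_le_mul_of_nonneg_left h5 (abs_nonneg (slopeClip σ x - slopeClip σ y))
  linarith

lemma lipschitzWith_slopeClip_div_cosClip (hσ : 0 ≤ σ) (hσ1 : σ < 1) :
    ∃ C, LipschitzWith C fun x => slopeClip σ x / cosClip σ x := by
  set γ := √(1 - σ ^ 2)
  have hγ : 0 < γ := Real.sqrt_pos.2 (by nlinarith)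
  set L := 1 / γ
  refine ⟨((1 + L) / γ ^ 2).toNNReal, LipschitzWith.of_dist_le_mul fun x y => ?_⟩
  rw [Real.coe_toNNReal _ (by positivity), Real.dist_eq]
  have hx := cosClip_pos hσ hσ1 x
  have hy := cosClip_pos hσ hσ1 y
  have hq := (lipschitzWith_slopeClip σ).dist_le_mul x y
  have hg := (lipschitzWith_cosClip hσ hσ1).dist_le_mul y x
  rw [NNReal.coe_one, one_mul, Real.dist_eq] at hq
  rw [Real.coe_toNNReal _ (by positivity), Real.dist_eq, dist_comm] at hg
  rw [div_sub_div _ _ hx.ne' hy.ne', abs_div, abs_of_pos (mul_pos hx hy),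
    div_mul_eq_mul_div]
  refine div_le_div₀ (by positivity) ?_ (by positivity) ?_
  · calc |slopeClip σ x * cosClip σ y - cosClip σ x * slopeClip σ y|
        = |(slopeClip σ x - slopeClip σ y) * cosClip σ y
            + slopeClip σ y * (cosClip σ y - cosClip σ x)| := by congr 1; ring
      _ ≤ |slopeClip σ x - slopeClip σ y| * |cosClip σ y|
            + |slopeClip σ y| * |cosClip σ y - cosClip σ x| := by
          rw [← abs_mul, ← abs_mul]; exact abs_add_le _ _
      _ ≤ dist x y * 1 + 1 * (L * dist x y) := by
          have h1 := (abs_slopeClip_le hσ y).trans hσ1.le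
          have h2 : |cosClip σ y| ≤ 1 := by rw [abs_of_pos hy]; exact cosClip_le_one _ _
          gcongr
      _ = _ := by ring
  · rw [sq]
    exact mul_le_mul (sqrt_le_cosClip hσ x) (sqrt_le_cosClip hσ y) hγ.le hx.le

lemma abs_lt_of_abs_slopeClip_lt (h : |slopeClip σ x| < σ) : |x| < σ := by
  rw [abs_lt, slopeClip] at h
  rw [abs_lt]
  obtain ⟨h1, h2⟩ := h
  have h3 := (lt_max_iff.1 h1).resolve_left (lt_irrefl _)
  exact ⟨(lt_min_iff.1 h3).2,
    (min_lt_iff.1 (max_lt_iff.1 h2).2).resolve_left (lt_irrefl _)⟩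

lemma hasDerivAt_slopeClip_div_cosClip (hσ1 : σ < 1) (hx : |x| < σ) :
    HasDerivAt (fun x => slopeClip σ x / cosClip σ x) (1 / cosClip σ x ^ 3) x := by
  have hσ : 0 ≤ σ := (abs_nonneg x).trans hx.le
  have hpos := cosClip_pos hσ hσ1 x
  have hev : (fun x => slopeClip σ x / cosClip σ x) =ᶠ[𝓝 x] fun x => x / √(1 - x ^ 2) := by
    filter_upwards [continuous_abs.continuousAt.eventually_lt continuousAt_const hx] with y hy
    rw [cosClip, slopeClip_of_abs_le (le_of_lt hy)]
  refine HasDerivAt.congr_of_eventuallyEq ?_ hev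
  have hcos : cosClip σ x = √(1 - x ^ 2) := by rw [cosClip, slopeClip_of_abs_le hx.le]
  rw [hcos] at hpos ⊢
  have h1 : 0 < 1 - x ^ 2 := Real.sqrt_pos.1 hpos
  have hd := (hasDerivAt_id x).div ((((hasDerivAt_id x).pow 2).const_sub 1).sqrt h1.ne') hpos.ne'
  refine hd.congr_deriv ?_
  have hsq := Real.sq_sqrt h1.le
  simp only [id, Nat.cast_ofNat, Pi.pow_apply]
  field_simp
  rw [hsq]
  ring

end clip

/-! ### Existence of the front -/

/-- Existence of a travelling wave for the front equation
`-c + H(y)·√(1 + v'²) = μ·v''/(1 + v'²)`, with the speed and slope bounds. -/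
theorem front_existence (Y μ Hm HM : ℝ) (H : ℝ → ℝ)
    (hY : 0 < Y) (hμ : 0 < μ)
    (hmeas : Measurable H) (hper : Function.Periodic H Y)
    (hHm : 0 < Hm) (hbd : ∀ᵐ y : ℝ, Hm ≤ H y ∧ H y ≤ HM) :
    ∃ (c : ℝ) (v : ℝ → ℝ),
      (∀ y, DifferentiableAt ℝ v y) ∧
      (∃ K, LipschitzWith K (deriv v)) ∧
      Function.Periodic v Y ∧
      (∀ᵐ y : ℝ,
        -c + H y * Real.sqrt (1 + deriv v y ^ 2) =
          μ * deriv (deriv v) y / (1 + deriv v y ^ 2)) ∧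
      Hm ≤ c ∧ c ≤ HM ∧
      ∀ y, |deriv v y| ≤ Real.sqrt (HM ^ 2 / Hm ^ 2 - 1) := by
  have hle : Hm ≤ HM := by
    obtain ⟨y, hy⟩ := hbd.exists
    exact hy.1.trans hy.2
  have hHM : 0 < HM := hHm.trans_le hle
  set r := Hm / HM with hr
  have hr0 : 0 < r := by positivity
  have hr1 : r ≤ 1 := (div_le_one hHM).2 hle
  -- This `σ` has `√(1 - σ²) = r / 2 < r`: the clipping starts strictly outside the slopes that the
  -- a priori bound `g (Z t) ≥ r` allows.
  set σ := √(1 - (r / 2) ^ 2) with hσ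
  have hσsq : σ ^ 2 = 1 - (r / 2) ^ 2 := Real.sq_sqrt (by nlinarith)
  have hσ0 : 0 < σ := Real.sqrt_pos.2 (by nlinarith)
  have hσ1 : σ < 1 := by nlinarith
  set γ := √(1 - σ ^ 2)
  have hγ : 0 < γ := Real.sqrt_pos.2 (by nlinarith)
  set g := cosClip σ with hg
  have hgL : LipschitzWith _ g := lipschitzWith_cosClip hσ0.le hσ1
  have hgγ : ∀ x, γ ≤ g x := sqrt_le_cosClip hσ0.le
  have hg1 : ∀ x, g x ≤ 1 := cosClip_le_one σ
  have hg0 : ∀ x, 0 < g x := cosClip_pos hσ0.le hσ1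
  set φ : ℝ → ℝ := fun x => slopeClip σ x / g x with hφ
  obtain ⟨C, hφL⟩ := lipschitzWith_slopeClip_div_cosClip hσ0.le hσ1
  have hφc : Continuous φ := hφL.continuous
  have hφsq : ∀ x, 1 + φ x ^ 2 = 1 / g x ^ 2 := by
    intro x
    have h1 := (hg0 x).ne'
    have h2 : g x ^ 2 = 1 - slopeClip σ x ^ 2 := cosClip_sq hσ0.le hσ1 x
    simp only [hφ]
    field_simp
    linarith
  have hloc : LocallyIntegrable (fun t => H t / μ) := by
    refine MemLp.locallyIntegrable (p := ⊤) ?_ le_top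
    refine memLp_top_of_bound (hmeas.div_const μ).aestronglyMeasurable (HM / μ) ?_
    filter_upwards [hbd] with t ht
    rw [Real.norm_of_nonneg (div_nonneg (hHm.le.trans ht.1) hμ.le)]
    gcongr
    exact ht.2
  have hint : ∀ s t, IntervalIntegrable (fun t => H t / μ) volume s t :=
    fun s t => (hloc.integrableOn_isCompact isCompact_uIcc).intervalIntegrable
  set p : ℝ → ℝ := fun t => ∫ s in 0..t, H s / μ with hp
  have hpsub : ∀ s t, p t - p s = ∫ x in s..t, H x / μ := fun s t =>
    intervalIntegral.integral_interval_sub_left (hint _ _) (hint _ _)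
  have hp₀ : ∀ s t, s ≤ t → Hm / μ * (t - s) ≤ p t - p s := by
    intro s t hst
    rw [hpsub, mul_comm, ← smul_eq_mul, ← intervalIntegral.integral_const]
    refine intervalIntegral.integral_mono_ae hst intervalIntegrable_const (hint _ _) ?_
    filter_upwards [hbd] with x hx
    gcongr
    exact hx.1
  have hp₁ : ∀ s t, s ≤ t → p t - p s ≤ HM / μ * (t - s) := by
    intro s t hst
    rw [hpsub, mul_comm, ← smul_eq_mul, ← intervalIntegral.integral_const]
    refine intervalIntegral.integral_mono_ae hst (hint _ _) intervalIntegrable_const ?_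
    filter_upwards [hbd] with x hx
    gcongr
    exact hx.2
  have hpc : Continuous p := intervalIntegral.continuous_primitive hint 0
  have hp0 : p 0 = 0 := intervalIntegral.integral_same
  have hpmono : Monotone p := fun s t hst => by
    have := mul_nonneg (div_pos hHm hμ).le (sub_nonneg.2 hst)
    linarith [hp₀ s t hst]
  have hpper : ∀ t, p (t + Y) = p t + p Y := by
    intro t
    have hperμ : Function.Periodic (fun t => H t / μ) Y := fun t => by simp only [hper t]
    have h1 := hpsub t (t + Y)
    rw [hperμ.intervalIntegral_add_eq t 0, zero_add] at h1
    linarith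
  obtain ⟨k, a, u, hk, hu, huY, hφint⟩ := IsFrontSol.exists_shoot (φ := φ) (B := 1 / γ) hgL hγ hgγ
    hg1 hpc hY (fun t ht => hp0 ▸ hpmono ht.1) (fun t ht => hpmono ht.2) hφc
    (fun x => by
      rw [abs_div, abs_of_pos (hg0 x)]
      exact div_le_div₀ zero_le_one ((abs_slopeClip_le hσ0.le x).trans hσ1.le) hγ (hgγ x))
    (fun x hx => div_nonneg (slopeClip_nonneg hσ0.le hx) (hg0 x).le)
    (fun x hx => div_nonpos_of_nonpos_of_nonneg (slopeClip_nonpos hσ0.le hx) (hg0 x).le)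
  obtain ⟨U, hU, hZper, hUu⟩ := hu.exists_periodic hgL.continuous hpc hp0 hpper hY huY
  set Z : ℝ → ℝ := fun t => U t + p t with hZ
  have hUc : Continuous U := continuous_iff_continuousAt.2 fun t => (hU t).continuousAt
  have hwc : Continuous fun t => φ (Z t) := hφc.comp (hUc.add hpc)
  set v : ℝ → ℝ := fun t => ∫ s in 0..t, φ (Z s) with hv
  have hvd : ∀ t, HasDerivAt v (φ (Z t)) t := fun t =>
    intervalIntegral.integral_hasDerivAt_right (hwc.intervalIntegrable _ _)
      (hwc.stronglyMeasurableAtFilter _ _) hwc.continuousAt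
  have hdv : deriv v = fun t => φ (Z t) := funext fun t => (hvd t).deriv
  have hvY : v Y = 0 := by
    rw [← hφint]
    refine intervalIntegral.integral_congr fun t ht => ?_
    rw [uIcc_of_le hY.le] at ht
    simp only [hZ, hUu ht]
  have hvper : Function.Periodic v Y := by
    intro t
    have hwper : Function.Periodic (fun t => φ (Z t)) Y := fun t => by
      simp only [show Z (t + Y) = Z t from hZper t]
    have h1 : v (t + Y) - v t = ∫ s in t..t + Y, φ (Z s) :=
      intervalIntegral.integral_interval_sub_left (hwc.intervalIntegrable _ _)
        (hwc.intervalIntegrable _ _)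
    rw [hwper.intervalIntegral_add_eq t 0, zero_add] at h1
    have h2 : v Y = ∫ s in 0..Y, φ (Z s) := rfl
    linarith
  have hZne := fun ℓ hℓ => ne_level_of_speed (ℓ := ℓ) hY hU hpc hZper hp₀ hp₁ hℓ
  have hcm : Hm ≤ μ * k := by
    have h1 := hu.init_sub_le hk hg1 (right_mem_Icc.2 hY.le)
    have h2 := hp₀ 0 Y hY.le
    rw [hp0, sub_zero, sub_zero] at h2
    have h3 : Hm / μ ≤ k := le_of_mul_le_mul_right (by linarith) hY
    rwa [div_le_iff₀' hμ] at h3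
  have hcM : μ * k ≤ HM := by
    by_contra! hlt
    obtain ⟨t, -, ht⟩ := exists_hasDerivAt_eq_zero hY
      (fun t _ => (hvd t).continuousAt.continuousWithinAt)
      (show v 0 = v Y by rw [hvY]; exact intervalIntegral.integral_same) (fun t _ => hvd t)
    have hq : slopeClip σ (Z t) = 0 := (div_eq_zero_iff.1 ht).resolve_right (hg0 _).ne'
    have hZσ : |Z t| < σ := abs_lt_of_abs_slopeClip_lt (by rwa [hq, abs_zero])
    rw [slopeClip_of_abs_le hZσ.le] at hq
    have hg00 : g 0 = 1 := by
      rw [hg, cosClip, slopeClip_of_abs_le (by simpa using hσ0.le)]; simp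
    refine hZne 0 (Or.inl ?_) t hq
    rwa [hg00, mul_one, div_lt_iff₀' hμ]
  have hrg : ∀ t, r ≤ g (Z t) := by
    intro t
    by_contra! hlt
    refine hZne (Z t) (Or.inr ?_) t rfl
    have hk0 : 0 < k := pos_of_mul_pos_right (hHm.trans_le hcm) hμ.le
    calc k * g (Z t) < k * r := by gcongr
      _ ≤ HM / μ * r := by
          have : k ≤ HM / μ := by rwa [le_div_iff₀' hμ]
          gcongr
      _ = Hm / μ := by rw [hr]; field_simp
  have hZσ : ∀ t, |Z t| < σ := by
    intro t
    refine abs_lt_of_abs_slopeClip_lt (abs_lt_of_sq_lt_sq ?_ hσ0.le)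
    have h1 : g (Z t) ^ 2 = 1 - slopeClip σ (Z t) ^ 2 := cosClip_sq hσ0.le hσ1 _
    nlinarith [hrg t]
  refine ⟨μ * k, v, fun y => (hvd y).differentiableAt, ?_, hvper, ?_, hcm, hcM, fun y => ?_⟩
  · have hUL : LipschitzWith k.toNNReal U := by
      refine lipschitzWith_of_nnnorm_deriv_le (fun t => (hU t).differentiableAt) fun t => ?_
      rw [(hU t).deriv, ← NNReal.coe_le_coe, coe_nnnorm, Real.coe_toNNReal _ hk, norm_mul,
        norm_neg, Real.norm_of_nonneg hk, Real.norm_of_nonneg (hg0 _).le]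
      exact mul_le_of_le_one_right hk (hg1 _)
    have hpL : LipschitzWith (HM / μ).toNNReal p := by
      refine LipschitzWith.of_dist_le_mul fun s t => ?_
      rw [Real.coe_toNNReal _ (by positivity)]
      wlog hst : s ≤ t generalizing s t
      · rw [dist_comm, dist_comm s]; exact this t s (le_of_not_ge hst)
      rw [dist_comm, dist_comm s, Real.dist_eq, Real.dist_eq, abs_of_nonneg (sub_nonneg.2 hst),
        abs_of_nonneg (sub_nonneg.2 (hpmono hst))]
      exact hp₁ s t hst
    rw [hdv]
    exact ⟨_, hφL.comp (hUL.add hpL)⟩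
  · filter_upwards [LocallyIntegrable.ae_hasDerivAt_integral hloc] with t ht
    have hZd : HasDerivAt Z (-k * g (Z t) + H t / μ) t := (hU t).add (ht 0)
    have hw : HasDerivAt (deriv v) (1 / g (Z t) ^ 3 * (-k * g (Z t) + H t / μ)) t := by
      rw [hdv]
      exact (hasDerivAt_slopeClip_div_cosClip hσ1 (hZσ t)).comp t hZd
    rw [hw.deriv, hdv]
    simp only [hφsq]
    have hgt := hg0 (Z t)
    rw [Real.sqrt_div zero_le_one, Real.sqrt_one, Real.sqrt_sq hgt.le]
    field_simp
  · rw [hdv]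
    refine Real.abs_le_sqrt ?_
    have h1 := hφsq (Z y)
    have h2 : 1 / g (Z y) ^ 2 ≤ 1 / r ^ 2 := by gcongr; exact hrg y
    have h3 : 1 / r ^ 2 = HM ^ 2 / Hm ^ 2 := by rw [hr]; field_simp
    simp only
    linarith
end

section
/- Let Y > 0, μ > 0, and let H : ℝ → ℝ be measurable and Y-periodic with constants 0 < H_m ≤ H(y) ≤ H_M for almost every y ∈ ℝ. If (c₁, v₁) and (c₂, v₂) are two pairs, each consisting of a real number and a Y-periodic function in W^{2,∞}(ℝ), satisfying −cᵢ + H(y)·√(1 + vᵢ'(y)²) = μ·vᵢ''(y)/(1 + vᵢ'(y)²) for almost every y ∈ ℝ (i = 1, 2), then c₁ = c₂ and v₁ − v₂ is a constant function. -/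
/-!
Write `p = v₁'` and `q = v₂'`; both are Lipschitz and `Y`-periodic. Solving each equation for the
second derivative gives `p' = F c₁ (H y) p` and `q' = F c₂ (H y) q` almost everywhere, where
`F c h p = (1 + p²) (-c + h √(1 + p²)) / μ` is decreasing in `c` and, for `p`, `h` bounded,
Lipschitz in `p` (`abs_frontRHS_sub_le`). By symmetry let `c₁ ≤ c₂`. Then `w = p - q` satisfies the
one-sided inequality `w' ≥ -L |w|` almost everywhere.

By Rolle's theorem applied to the periodic function `v₁ - v₂`, `w` vanishes at some `y₀`, hence
also at `y₀ + n Y` for every integer `n`. The inequality forces a periodic `w` with a zero to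
vanish identically (`eq_zero_of_periodic`): the function `(w⁺)² e^{2 L y}` is nondecreasing and
`(w⁻)² e^{-2 L y}` is nonincreasing, so `w⁺` vanishes to the left of each zero and `w⁻` to the right
of each zero. Monotonicity follows from the fundamental theorem of calculus for absolutely
continuous functions. Thus `v₁' = v₂'`, so `v₁ - v₂` is constant, and subtracting the two equations
at a single point gives `c₁ = c₂`.
-/

open MeasureTheory Real Filter

/-- The square of the positive part is differentiable, also at the origin. -/
lemma hasDerivAt_max_sq (x : ℝ) :
    HasDerivAt (fun x : ℝ => max x 0 ^ 2) (2 * max x 0) x := by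
  rcases lt_trichotomy x 0 with h | h | h
  · rw [max_eq_right h.le, mul_zero]
    refine (hasDerivAt_const x (0 : ℝ)).congr_of_eventuallyEq ?_
    filter_upwards [eventually_lt_nhds h] with z hz
    simp [max_eq_right hz.le]
  · subst h
    rw [max_self, mul_zero, hasDerivAt_iff_isLittleO]
    have hsq : (fun x : ℝ => x ^ 2) =o[nhds 0] fun x : ℝ => x := by
      simpa using Asymptotics.isLittleO_pow_pow (𝕜 := ℝ) (show 1 < 2 by norm_num)
    refine Asymptotics.IsBigO.trans_isLittleO (g := fun x : ℝ => x ^ 2) ?_ (by simpa using hsq)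
    refine Asymptotics.IsBigO.of_bound 1 (Eventually.of_forall fun z => ?_)
    rcases le_total z 0 with hz | hz
    · simp [max_eq_right hz, sq_nonneg]
    · simp [max_eq_left hz]
  · rw [max_eq_left h.le]
    have := hasDerivAt_pow 2 x
    refine (HasDerivAt.congr_of_eventuallyEq (f := fun x : ℝ => x ^ 2) (by simpa using this) ?_)
    filter_upwards [eventually_gt_nhds h] with z hz
    simp [max_eq_left hz.le]

/-- Weighted monotonicity of the squared positive part of a Lipschitz function `u`, with
exponential weight `e^{κ y}`; the sign `σ` selects nondecreasing or nonincreasing. -/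
lemma posPart_sq_mul_exp_mono {u : ℝ → ℝ} {K : NNReal} (hu : LipschitzWith K u) (σ κ : ℝ)
    (hd : ∀ᵐ y : ℝ, 0 ≤ σ * (2 * max (u y) 0 * deriv u y + κ * max (u y) 0 ^ 2))
    {a b : ℝ} (hab : a ≤ b) :
    σ * (max (u a) 0 ^ 2 * exp (κ * a)) ≤ σ * (max (u b) 0 ^ 2 * exp (κ * b)) := by
  have hmax : AbsolutelyContinuousOnInterval (fun y => max (u y) 0) a b :=
    (hu.max_const 0).lipschitzOnWith.absolutelyContinuousOnInterval
  have hexp : AbsolutelyContinuousOnInterval (fun y => exp (κ * y)) a b :=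
    ContDiffOn.absolutelyContinuousOnInterval (by fun_prop)
  have hac : AbsolutelyContinuousOnInterval
      (fun y => σ * (max (u y) 0 ^ 2 * exp (κ * y))) a b := by
    simpa [pow_two, Pi.mul_def] using ((hmax.mul hmax).mul hexp).const_mul σ
  have hint := hac.integral_deriv_eq_sub
  have hnn : 0 ≤ ∫ y in a..b, deriv (fun y => σ * (max (u y) 0 ^ 2 * exp (κ * y))) y := by
    refine intervalIntegral.integral_nonneg_of_ae hab ?_
    filter_upwards [hd, hu.ae_differentiableAt_real] with y hy hdy
    have h1 : HasDerivAt (fun y => max (u y) 0 ^ 2) (2 * max (u y) 0 * deriv u y) y :=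
      (hasDerivAt_max_sq (u y)).comp y hdy.hasDerivAt
    have h2 : HasDerivAt (fun y => exp (κ * y)) (exp (κ * y) * (κ * 1)) y :=
      ((hasDerivAt_id y).const_mul κ).exp
    rw [((h1.fun_mul h2).const_mul σ).deriv]
    have := mul_nonneg hy (exp_pos (κ * y)).le
    simp only [Pi.zero_apply]
    linarith
  linarith

/-- A periodic Lipschitz function with a zero and with `w' ≥ -L |w|` almost everywhere vanishes. -/
lemma eq_zero_of_periodic {w : ℝ → ℝ} {K : NNReal} {Y L y₀ : ℝ} (hY : 0 < Y)
    (hw : LipschitzWith K w) (hper : Function.Periodic w Y) (h₀ : w y₀ = 0)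
    (hd : ∀ᵐ y : ℝ, -(L * |w y|) ≤ deriv w y) (y : ℝ) : w y = 0 := by
  obtain ⟨z, hz, hyz⟩ := hper.exists_mem_Ico hY y y₀
  rw [hyz]
  apply le_antisymm
  · have h := posPart_sq_mul_exp_mono hw 1 (2 * L) (by
      filter_upwards [hd] with x hx
      rcases le_total (w x) 0 with h | h
      · simp [max_eq_right h]
      · rw [max_eq_left h]
        rw [abs_of_nonneg h] at hx
        nlinarith) hz.2.le
    rw [hper y₀, h₀] at h
    by_contra! hlt
    rw [max_eq_left hlt.le] at h
    have : 0 < w z ^ 2 * exp (2 * L * z) := by positivity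
    simp at h
    linarith
  · have h := posPart_sq_mul_exp_mono (u := fun x => -w x) hw.neg (-1) (-(2 * L)) (by
      filter_upwards [hd] with x hx
      rw [deriv.fun_neg]
      rcases le_total (w x) 0 with h | h
      · rw [max_eq_left (by linarith)]
        rw [abs_of_nonpos h] at hx
        nlinarith
      · simp [h]) hz.1
    rw [h₀] at h
    by_contra! hlt
    rw [max_eq_left (show 0 ≤ -w z by linarith)] at h
    have : 0 < (-w z) ^ 2 * exp (-(2 * L) * z) :=
      mul_pos (pow_pos (by linarith) 2) (exp_pos _)
    simp at h this
    linarith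

/-- The right-hand side of the front equation solved for the second derivative, as a function of
the speed `c`, the value `h` of `H` and the slope `p`. -/
noncomputable def frontRHS (μ c h p : ℝ) : ℝ := (1 + p ^ 2) * (-c + h * √(1 + p ^ 2)) / μ

lemma abs_frontRHS_sub_le {μ c h p q M B : ℝ} (hμ : 0 < μ) (hp : |p| ≤ M) (hq : |q| ≤ M)
    (hh : |h| ≤ B) :
    |frontRHS μ c h p - frontRHS μ c h q| ≤
      (|c| * (2 * (1 + M)) + B * (3 * (1 + M) ^ 2)) / μ * |p - q| := by
  have hM : 0 ≤ M := (abs_nonneg p).trans hp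
  have hB : 0 ≤ B := (abs_nonneg h).trans hh
  have key : ∀ r : ℝ, |r| ≤ M → √(1 + r ^ 2) ^ 2 = 1 + r ^ 2 ∧ 0 < √(1 + r ^ 2) ∧
      |r| ≤ √(1 + r ^ 2) ∧ √(1 + r ^ 2) ≤ 1 + M := by
    intro r hr
    refine ⟨sq_sqrt (by positivity), by positivity, abs_le_sqrt (by linarith), ?_⟩
    rw [sqrt_le_left (by linarith)]
    nlinarith [sq_abs r, abs_nonneg r]
  obtain ⟨hs2, hs0, hsp, hsM⟩ := key p hp
  obtain ⟨ht2, ht0, htq, htM⟩ := key q hq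
  unfold frontRHS
  set s := √(1 + p ^ 2)
  set t := √(1 + q ^ 2)
  rw [← hs2, ← ht2]
  have hst : |s - t| ≤ |p - q| := by
    have h1 : |s - t| * (s + t) = |p - q| * |p + q| := by
      rw [← abs_of_pos (add_pos hs0 ht0), ← abs_mul, ← abs_mul]
      congr 1
      linear_combination hs2 - ht2
    have h2 : |p + q| ≤ s + t := (abs_add_le p q).trans (add_le_add hsp htq)
    have h3 : |p - q| * |p + q| ≤ |p - q| * (s + t) := by gcongr
    exact le_of_mul_le_mul_right (h1.trans_le h3) (add_pos hs0 ht0)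
  have e : s ^ 2 * (-c + h * s) / μ - t ^ 2 * (-c + h * t) / μ =
      (-c * (s + t) + h * (s ^ 2 + s * t + t ^ 2)) / μ * (s - t) := by ring
  rw [e, abs_mul, abs_div, abs_of_pos hμ]
  have h1 : |-c * (s + t) + h * (s ^ 2 + s * t + t ^ 2)| ≤
      |c| * (2 * (1 + M)) + B * (3 * (1 + M) ^ 2) := by
    refine (abs_add_le _ _).trans ?_
    rw [abs_mul, abs_mul, abs_neg, abs_of_pos (add_pos hs0 ht0),
      abs_of_pos (show 0 < s ^ 2 + s * t + t ^ 2 by positivity)]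
    have h2 : s + t ≤ 2 * (1 + M) := by linarith
    have h3 : s ^ 2 + s * t + t ^ 2 ≤ 3 * (1 + M) ^ 2 := by
      have a1 : s ^ 2 ≤ (1 + M) ^ 2 := by gcongr
      have a2 : t ^ 2 ≤ (1 + M) ^ 2 := by gcongr
      have a3 : s * t ≤ (1 + M) * (1 + M) := by gcongr
      linarith
    gcongr
  gcongr

lemma deriv_periodic {v : ℝ → ℝ} {Y : ℝ} (h : Function.Periodic v Y) :
    Function.Periodic (deriv v) Y := fun x => by
  rw [← deriv_comp_add_const, show (fun x => v (x + Y)) = v from funext h]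

lemma exists_abs_deriv_le {v : ℝ → ℝ} {Y : ℝ} (hY : 0 < Y) (h : Function.Periodic v Y)
    (hc : Continuous (deriv v)) : ∃ M, ∀ y, |deriv v y| ≤ M := by
  obtain ⟨M, hM⟩ := ((deriv_periodic h).isBounded_of_continuous hY.ne' hc).exists_norm_le
  exact ⟨M, fun y => hM _ ⟨y, rfl⟩⟩

/-- Equality of the slopes when the speeds are ordered. -/
lemma deriv_eq_of_speed_le (Y μ HM : ℝ) (H : ℝ → ℝ) (c₁ c₂ : ℝ) (v₁ v₂ : ℝ → ℝ)
    (hY : 0 < Y) (hμ : 0 < μ) (hc : c₁ ≤ c₂) (hbd : ∀ᵐ y : ℝ, |H y| ≤ HM)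
    (hv₁ : ∀ y, DifferentiableAt ℝ v₁ y) (hlip₁ : ∃ K, LipschitzWith K (deriv v₁))
    (hper₁ : Function.Periodic v₁ Y)
    (heq₁ : ∀ᵐ y : ℝ, deriv (deriv v₁) y = frontRHS μ c₁ (H y) (deriv v₁ y))
    (hv₂ : ∀ y, DifferentiableAt ℝ v₂ y) (hlip₂ : ∃ K, LipschitzWith K (deriv v₂))
    (hper₂ : Function.Periodic v₂ Y)
    (heq₂ : ∀ᵐ y : ℝ, deriv (deriv v₂) y = frontRHS μ c₂ (H y) (deriv v₂ y)) (y : ℝ) :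
    deriv v₁ y = deriv v₂ y := by
  obtain ⟨K₁, hK₁⟩ := hlip₁
  obtain ⟨K₂, hK₂⟩ := hlip₂
  obtain ⟨M₁, hM₁⟩ := exists_abs_deriv_le hY hper₁ hK₁.continuous
  obtain ⟨M₂, hM₂⟩ := exists_abs_deriv_le hY hper₂ hK₂.continuous
  have hdiff : Differentiable ℝ fun y => v₁ y - v₂ y := fun y => (hv₁ y).sub (hv₂ y)
  obtain ⟨y₀, -, hy₀⟩ := exists_deriv_eq_zero (f := fun y => v₁ y - v₂ y) hY
    hdiff.continuous.continuousOn (by simpa using congrArg₂ (· - ·) hper₁.eq.symm hper₂.eq.symm)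
  rw [deriv_fun_sub (hv₁ _) (hv₂ _)] at hy₀
  refine sub_eq_zero.mp (eq_zero_of_periodic
    (w := fun y => deriv v₁ y - deriv v₂ y) (y₀ := y₀)
    (L := (|c₁| * (2 * (1 + max M₁ M₂)) + HM * (3 * (1 + max M₁ M₂) ^ 2)) / μ) hY (hK₁.sub hK₂)
    ((deriv_periodic hper₁).sub (deriv_periodic hper₂)) hy₀ ?_ y)
  filter_upwards [hbd, heq₁, heq₂, hK₁.ae_differentiableAt_real, hK₂.ae_differentiableAt_real]
    with x hx h1 h2 hd1 hd2
  rw [deriv_fun_sub hd1 hd2, h1, h2]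
  have hL := abs_frontRHS_sub_le (c := c₁) hμ ((hM₁ x).trans (le_max_left M₁ M₂))
    ((hM₂ x).trans (le_max_right M₁ M₂)) hx
  have hmono : frontRHS μ c₂ (H x) (deriv v₂ x) ≤ frontRHS μ c₁ (H x) (deriv v₂ x) := by
    unfold frontRHS
    gcongr
  linarith [neg_le_of_abs_le hL]

/-- Uniqueness for the front equation: the speed is unique and the profile is unique
up to an additive constant. -/
theorem front_uniqueness (Y μ Hm HM : ℝ) (H : ℝ → ℝ) (c₁ c₂ : ℝ) (v₁ v₂ : ℝ → ℝ)
    (hY : 0 < Y) (hμ : 0 < μ)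
    (hmeas : Measurable H) (hper : Function.Periodic H Y)
    (hHm : 0 < Hm) (hbd : ∀ᵐ y : ℝ, Hm ≤ H y ∧ H y ≤ HM)
    (hv₁ : ∀ y, DifferentiableAt ℝ v₁ y) (hlip₁ : ∃ K, LipschitzWith K (deriv v₁))
    (hper₁ : Function.Periodic v₁ Y)
    (heq₁ : ∀ᵐ y : ℝ, -c₁ + H y * Real.sqrt (1 + deriv v₁ y ^ 2) =
        μ * deriv (deriv v₁) y / (1 + deriv v₁ y ^ 2))
    (hv₂ : ∀ y, DifferentiableAt ℝ v₂ y) (hlip₂ : ∃ K, LipschitzWith K (deriv v₂))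
    (hper₂ : Function.Periodic v₂ Y)
    (heq₂ : ∀ᵐ y : ℝ, -c₂ + H y * Real.sqrt (1 + deriv v₂ y ^ 2) =
        μ * deriv (deriv v₂) y / (1 + deriv v₂ y ^ 2)) :
    c₁ = c₂ ∧ ∃ k : ℝ, ∀ y, v₁ y - v₂ y = k := by
  have hbd' : ∀ᵐ y : ℝ, |H y| ≤ HM := by
    filter_upwards [hbd] with y hy
    rw [abs_of_nonneg (by linarith)]
    exact hy.2
  have solve : ∀ {c h p r : ℝ}, -c + h * √(1 + p ^ 2) = μ * r / (1 + p ^ 2) →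
      r = frontRHS μ c h p := by
    intro c h p r hr
    have : (0 : ℝ) < 1 + p ^ 2 := by positivity
    unfold frontRHS
    rw [hr]
    field_simp
  have heq₁' := heq₁.mono fun y hy => solve hy
  have heq₂' := heq₂.mono fun y hy => solve hy
  have hp : ∀ y, deriv v₁ y = deriv v₂ y := by
    rcases le_total c₁ c₂ with hc | hc
    · exact deriv_eq_of_speed_le Y μ HM H c₁ c₂ v₁ v₂ hY hμ hc hbd' hv₁ hlip₁ hper₁ heq₁'
        hv₂ hlip₂ hper₂ heq₂'
    · exact fun y => (deriv_eq_of_speed_le Y μ HM H c₂ c₁ v₂ v₁ hY hμ hc hbd' hv₂ hlip₂ hper₂ heq₂'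
        hv₁ hlip₁ hper₁ heq₁' y).symm
  constructor
  · obtain ⟨y, h1, h2⟩ := (heq₁.and heq₂).exists
    rw [show deriv v₁ = deriv v₂ from funext hp] at h1
    linarith
  · refine ⟨v₁ 0 - v₂ 0, fun y => ?_⟩
    refine is_const_of_deriv_eq_zero (f := fun y => v₁ y - v₂ y)
      (fun y => (hv₁ y).sub (hv₂ y)) (fun x => ?_) y 0
    rw [deriv_fun_sub (hv₁ x) (hv₂ x), hp x, sub_self]
end

section
/- Let Y > 0, let a, b, g : ℝ → ℝ be measurable, Y-periodic functions with constants 0 < a_m ≤ a(y) ≤ a_M, 0 < b_m ≤ b(y) ≤ b_M, 0 < g_m ≤ g(y) ≤ g_M for almost every y, let c > 0 and let v : ℝ → ℝ be Y-periodic and Lipschitz. If u₁ and u₂ are both variational solutions of the temperature problem associated with (c, v), then u₁ = u₂ almost everywhere on Ω. -/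
/-!
The difference `w = u₁ - u₂` solves the problem without source term. Testing that equation with
`η w`, where `η ≥ 0` is a compactly supported weight, and integrating the convection term by parts
in `x` gives

  `∫ a η |∇w|² + a w ∇w·∇η - (c/2) b w² ∂ₓη = -(c/2) ∫ b η w² dy ≤ 0`,

the last integral being over the boundary `x = v(y)`. To avoid traces, `w` is replaced in the test
function by its mollification with kernels shifted towards positive `x`: as `v` is Lipschitz, such a
mollification only sees values of `w` in `Ω`, is smooth up to the boundary, and has the mollified
weak derivatives as its derivatives (`moll_deriv`). In the limit only the sign of the boundary term
is used (`energy`, `energy_periodic`).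

Control of `w` itself, not only of `∇w`, comes from the choice of the weight. It is
`η = (2 - exp (δ (x - V))) s` with `V ≥ v`, a cutoff `s` at scale `R` and `δ = c bm / (2 aM)`. Up to
the cutoff it decreases in `x`, so the convection term yields a positive multiple of
`exp (δ (x - V)) w²`; for this `δ` that term and `a η |∇w|²` dominate the cross term `a w ∂ₓw ∂ₓη`.
The derivatives of the cutoff contribute errors of size `1 / R` (`form_lower_bound`). For `R = n Y`
the integrals run over a number of periodicity cells proportional to `n`. So the weighted mass of `w`
in one cell, multiplied by `n`, stays bounded, and `w = 0` (`homogeneous_zero`).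

The definition of a solution only requires the squares of `u`, `ux`, `uy` to be integrable over a
cell, which does not make these functions measurable, and Bochner integrals of non-integrable
functions are zero by convention. Measurability is nevertheless automatic. The right-hand side of
the equation is a nonzero linear functional of the test function, so all integrands representing it
are integrable (`integrable_of_additive`), and local choices of test functions isolate `ux` and
`uy`. These do not both vanish, and the weak derivative identity gives the same for `u`
(`IsVarSolWith.aesm`).
-/

open MeasureTheory Real Filter

noncomputable section

/-- The fresh region `Ω = {(x,y) : x < v(y)}`. -/
def Omg (v : ℝ → ℝ) : Set (ℝ × ℝ) := {p | p.1 < v p.2}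

/-- One periodicity cell of the fresh region, `Ω_♯ = Ω ∩ {0 < y < Y}`. -/
def OmgS (Y : ℝ) (v : ℝ → ℝ) : Set (ℝ × ℝ) := {p | p.1 < v p.2 ∧ 0 < p.2 ∧ p.2 < Y}

/-- `Y`-periodicity in the second variable. -/
def PerY (Y : ℝ) (u : ℝ × ℝ → ℝ) : Prop := ∀ x y : ℝ, u (x, y + Y) = u (x, y)

/-- `ux`, `uy` are the weak partial derivatives of `u` on the open set `Omg v`:
integration by parts against smooth test functions compactly supported in `Omg v`. -/
def IsWeakDeriv (v : ℝ → ℝ) (u ux uy : ℝ × ℝ → ℝ) : Prop :=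
  ∀ φ : ℝ × ℝ → ℝ, ContDiff ℝ (⊤ : ℕ∞) φ → HasCompactSupport φ → tsupport φ ⊆ Omg v →
    (∫ p in Omg v, u p * fderiv ℝ φ p (1, 0)) = (-∫ p in Omg v, ux p * φ p) ∧
    (∫ p in Omg v, u p * fderiv ℝ φ p (0, 1)) = (-∫ p in Omg v, uy p * φ p)

/-- `u` is a variational solution of the temperature problem associated with `(c, v)`,
with explicitly given weak partial derivatives `ux`, `uy`. -/
def IsVarSolWith (Y : ℝ) (a b g : ℝ → ℝ) (c : ℝ) (v : ℝ → ℝ)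
    (u ux uy : ℝ × ℝ → ℝ) : Prop :=
  PerY Y u ∧ PerY Y ux ∧ PerY Y uy ∧
  IntegrableOn (fun p => u p ^ 2) (OmgS Y v) ∧
  IntegrableOn (fun p => ux p ^ 2) (OmgS Y v) ∧
  IntegrableOn (fun p => uy p ^ 2) (OmgS Y v) ∧
  IsWeakDeriv v u ux uy ∧
  ∀ φ : ℝ × ℝ → ℝ, ContDiff ℝ 1 φ → HasCompactSupport φ →
    (∫ p in Omg v, (c * b p.2 * ux p * φ p +
      a p.2 * (ux p * fderiv ℝ φ p (1, 0) + uy p * fderiv ℝ φ p (0, 1)))) =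
    ∫ y : ℝ, c * g y * φ (v y, y)

/-- `u` is a variational solution of the temperature problem associated with `(c, v)`. -/
def IsVarSol (Y : ℝ) (a b g : ℝ → ℝ) (c : ℝ) (v : ℝ → ℝ) (u : ℝ × ℝ → ℝ) : Prop :=
  ∃ ux uy : ℝ × ℝ → ℝ, IsVarSolWith Y a b g c v u ux uy

/-! ### Mollification -/

/-- The mollification `p ↦ ∫ f(r) ρ(p - r) dr` of `f` with kernel `ρ`. -/
def moll (ρ f : ℝ × ℝ → ℝ) (p : ℝ × ℝ) : ℝ := ∫ r, f r * ρ (p - r)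

/-- Continuity of translations in `L²`. -/
lemma tendsto_translate {f : ℝ × ℝ → ℝ} (hf : MemLp f 2 volume) :
    Tendsto (fun q : ℝ × ℝ => eLpNorm (fun p => f (p - q) - f p) 2 volume)
      (nhds 0) (nhds 0) := by
  have hmp : ∀ q : ℝ × ℝ, MeasurePreserving (fun p : ℝ × ℝ => p - q) volume volume :=
    fun q => measurePreserving_sub_right volume q
  let G : C((ℝ × ℝ) × (ℝ × ℝ), ℝ × ℝ) := ⟨fun z => z.2 - z.1, by fun_prop⟩
  have hg : Tendsto (fun q => G.curry q) (nhds 0) (nhds (G.curry 0)) :=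
    (G.curry.continuous.tendsto 0)
  have := Filter.Tendsto.compMeasurePreservingLp (p := 2) (l := nhds (0 : ℝ × ℝ))
    (tendsto_const_nhds (x := hf.toLp f)) hg (fun q => hmp q) (hmp 0) (by simp)
  have h2 : Tendsto (fun q => (hf.comp_measurePreserving (hmp q)).toLp (f ∘ fun p => p - q))
      (nhds 0) (nhds (hf.toLp f)) := by
    have h0 : Lp.compMeasurePreserving (G.curry 0) (hmp 0) (hf.toLp f) = hf.toLp f := by
      refine (MemLp.toLp_congr (hf.comp_measurePreserving (hmp 0)) hf ?_)
      simp only [sub_zero]; rfl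
    rw [h0] at this
    exact this
  rw [Lp.tendsto_Lp_iff_tendsto_eLpNorm''] at h2
  refine h2.congr fun q => ?_
  congr 1

lemma moll_eq (ρ f : ℝ × ℝ → ℝ) (p : ℝ × ℝ) : moll ρ f p = ∫ q, ρ q * f (p - q) := by
  unfold moll
  rw [← integral_sub_left_eq_self (fun r => f r * ρ (p - r)) volume p]
  simp [mul_comm]

lemma moll_hasFDerivAt {ρ f : ℝ × ℝ → ℝ} (hf : LocallyIntegrable f volume)
    (hρ : ContDiff ℝ 1 ρ) (hc : HasCompactSupport ρ) (p : ℝ × ℝ) :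
    DifferentiableAt ℝ (moll ρ f) p ∧
    ∀ e, fderiv ℝ (moll ρ f) p e = ∫ r, f r * fderiv ℝ ρ (p - r) e := by
  have h := hc.hasFDerivAt_convolution_right (ContinuousLinearMap.mul ℝ ℝ) hf hρ p
  have h' : HasFDerivAt (moll ρ f) _ p := h
  refine ⟨h'.differentiableAt, fun e => ?_⟩
  rw [h'.fderiv, convolution_precompR_apply (ContinuousLinearMap.mul ℝ ℝ) hf (hc.fderiv (𝕜 := ℝ)) (hρ.continuous_fderiv one_ne_zero)]
  rfl

lemma moll_contDiff {ρ f : ℝ × ℝ → ℝ} (hf : LocallyIntegrable f volume)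
    (hρ : ContDiff ℝ 1 ρ) (hc : HasCompactSupport ρ) : ContDiff ℝ 1 (moll ρ f) :=
  hc.contDiff_convolution_right (n := 1) (ContinuousLinearMap.mul ℝ ℝ) hf (by exact_mod_cast hρ)

/-- Jensen's inequality for the mollification: the mollification error is bounded in `L²` by the
largest translation error over the support of the kernel. -/
lemma moll_close {ρ f : ℝ × ℝ → ℝ} (hf : MemLp f 2 volume)
    (hρ : Continuous ρ) (hc : HasCompactSupport ρ) (hpos : ∀ q, 0 ≤ ρ q) (h1 : ∫ q, ρ q = 1)
    {ε : ENNReal}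
    (hε : ∀ q, ρ q ≠ 0 → eLpNorm (fun p => f (p - q) - f p) 2 volume ≤ ε) :
    eLpNorm (moll ρ f - f) 2 volume ≤ ε := by
  have hρi : Integrable ρ := hρ.integrable_of_hasCompactSupport hc
  have hfl : LocallyIntegrable f volume := hf.locallyIntegrable (by norm_num)
  have hint : ∀ p, Integrable (fun q => ρ q * f (p - q)) := by
    intro p
    have := (hc.convolutionExists_right (ContinuousLinearMap.mul ℝ ℝ) hfl hρ) p
    have h2 : Integrable (fun r => f r * ρ (p - r)) := this
    have h3 := h2.comp_sub_left p
    simpa [mul_comm] using h3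
  have hmass : ∫⁻ q, ENNReal.ofReal (ρ q) = 1 := by
    rw [← ofReal_integral_eq_lintegral_ofReal hρi (Eventually.of_forall hpos), h1]; simp
  have haesm : AEStronglyMeasurable (fun z : (ℝ × ℝ) × (ℝ × ℝ) => f (z.1 - z.2))
      (volume.prod volume) :=
    hf.1.comp_quasiMeasurePreserving (quasiMeasurePreserving_sub (volume : Measure (ℝ × ℝ)) volume)
  have haesm1 : ∀ p, AEStronglyMeasurable (fun q : ℝ × ℝ => f (p - q)) volume := fun p =>
    hf.1.comp_measurePreserving (Measure.measurePreserving_sub_left volume p)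
  have hJ : ∀ p, ‖moll ρ f p - f p‖ₑ ^ 2 ≤
      ∫⁻ q, ENNReal.ofReal (ρ q) * ‖f (p - q) - f p‖ₑ ^ 2 := by
    intro p
    have e1 : moll ρ f p - f p = ∫ q, ρ q * (f (p - q) - f p) := by
      rw [moll_eq]
      simp only [mul_sub]
      rw [integral_sub (hint p) (hρi.mul_const _), integral_mul_const, h1, one_mul]
    have e2 : ‖moll ρ f p - f p‖ₑ ≤ ∫⁻ q, ENNReal.ofReal (ρ q) * ‖f (p - q) - f p‖ₑ := by
      rw [e1]
      refine (enorm_integral_le_lintegral_enorm _).trans (le_of_eq ?_)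
      refine lintegral_congr fun q => ?_
      rw [enorm_mul, Real.enorm_eq_ofReal (hpos q)]
    set k : ℝ × ℝ → ENNReal := fun q => ‖f (p - q) - f p‖ₑ
    set s : ℝ × ℝ → ENNReal := fun q => (ENNReal.ofReal (ρ q)) ^ (1 / 2 : ℝ)
    have hs : ∀ q, s q * s q = ENNReal.ofReal (ρ q) := by
      intro q
      simp only [s]
      rw [← ENNReal.rpow_add_of_nonneg _ _ (by norm_num) (by norm_num)]; norm_num
    have hsm : Measurable s := (hρ.measurable.ennreal_ofReal).pow_const _
    have hkm : AEMeasurable k volume :=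
      ((haesm1 p).sub aestronglyMeasurable_const).enorm
    have hH := ENNReal.lintegral_mul_le_Lp_mul_Lq (volume : Measure (ℝ × ℝ))
      (Real.HolderConjugate.two_two) hsm.aemeasurable (hsm.aemeasurable.mul hkm)
    have e3 : ∫⁻ q, (s * (s * k)) q = ∫⁻ q, ENNReal.ofReal (ρ q) * k q := by
      refine lintegral_congr fun q => ?_
      simp only [Pi.mul_apply]
      rw [← mul_assoc, hs]
    have e4 : ∫⁻ q, s q ^ (2 : ℝ) = 1 := by
      rw [← hmass]
      refine lintegral_congr fun q => ?_
      rw [ENNReal.rpow_two, pow_two, hs]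
    have e5 : ∫⁻ q, (s * k) q ^ (2 : ℝ) = ∫⁻ q, ENNReal.ofReal (ρ q) * k q ^ 2 := by
      refine lintegral_congr fun q => ?_
      rw [ENNReal.rpow_two, Pi.mul_apply, mul_pow, pow_two (s q), hs]
    rw [e3, e4, e5, ENNReal.one_rpow, one_mul] at hH
    calc ‖moll ρ f p - f p‖ₑ ^ 2 ≤ ((∫⁻ q, ENNReal.ofReal (ρ q) * k q ^ 2) ^ (1 / 2 : ℝ)) ^ 2 := by
          gcongr; exact e2.trans hH
      _ = _ := by
          rw [← ENNReal.rpow_two, ← ENNReal.rpow_mul]; norm_num [k]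
  have key : ∫⁻ p, ‖moll ρ f p - f p‖ₑ ^ 2 ≤ ε ^ 2 := by
    calc ∫⁻ p, ‖moll ρ f p - f p‖ₑ ^ 2
        ≤ ∫⁻ p, ∫⁻ q, ENNReal.ofReal (ρ q) * ‖f (p - q) - f p‖ₑ ^ 2 := lintegral_mono hJ
      _ = ∫⁻ q, ∫⁻ p, ENNReal.ofReal (ρ q) * ‖f (p - q) - f p‖ₑ ^ 2 := by
          apply lintegral_lintegral_swap
          have hm1 : AEMeasurable (fun z : (ℝ × ℝ) × (ℝ × ℝ) => ENNReal.ofReal (ρ z.2))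
              (volume.prod volume) :=
            ((hρ.measurable.comp measurable_snd).ennreal_ofReal).aemeasurable
          have hm2 : AEStronglyMeasurable (fun z : (ℝ × ℝ) × (ℝ × ℝ) => f z.1)
              (volume.prod volume) := hf.1.comp_fst
          exact hm1.mul (((haesm.sub hm2).enorm).pow_const 2)
      _ ≤ ∫⁻ q, ENNReal.ofReal (ρ q) * ε ^ 2 := by
          refine lintegral_mono fun q => ?_
          rw [lintegral_const_mul' _ _ ENNReal.ofReal_ne_top]
          by_cases h0 : ρ q = 0
          · simp [h0]
          have := hε q h0
          gcongr
          rw [eLpNorm_eq_lintegral_rpow_enorm_toReal (by norm_num) (by norm_num)] at this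
          have h2 := ENNReal.rpow_le_rpow this (show (0 : ℝ) ≤ 2 by norm_num)
          rw [← ENNReal.rpow_mul] at h2
          simpa using h2
      _ = ε ^ 2 := by
          rw [lintegral_mul_const _ hρ.measurable.ennreal_ofReal, hmass, one_mul]
  rw [eLpNorm_eq_lintegral_rpow_enorm_toReal (by norm_num) (by norm_num)]
  have h3 := ENNReal.rpow_le_rpow key (show (0 : ℝ) ≤ 1 / 2 by norm_num)
  rw [← ENNReal.rpow_two, ← ENNReal.rpow_mul] at h3
  simpa using h3

/-! ### One-sided mollifiers and weak derivatives -/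

lemma memLp_bdd {α : Type*} [MeasurableSpace α] {μ : Measure α} {k f : α → ℝ} {C : ℝ}
    (hk : Measurable k) (hC : ∀ p, |k p| ≤ C) (hf : MemLp f 2 μ) :
    MemLp (fun p => k p * f p) 2 μ := by
  refine hf.of_le_mul (c := C) (hk.aestronglyMeasurable.mul hf.1) (Eventually.of_forall fun p => ?_)
  rw [norm_mul]
  exact mul_le_mul_of_nonneg_right (hC p) (norm_nonneg _)

lemma integrable_bdd {α : Type*} [MeasurableSpace α] {μ : Measure α} {k f g : α → ℝ} {C : ℝ}
    (hk : Measurable k) (hC : ∀ p, |k p| ≤ C) (hf : MemLp f 2 μ) (hg : MemLp g 2 μ) :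
    Integrable (fun p => k p * f p * g p) μ :=
  (memLp_bdd hk hC hf).integrable_mul hg

/-- Products of `L²`-convergent sequences, weighted by a bounded function, converge in mean. -/
lemma tendsto_bdd {α : Type*} [MeasurableSpace α] {μ : Measure α} {k f g : α → ℝ} {C : ℝ}
    {F G : ℕ → α → ℝ}
    (hk : Measurable k) (hC : ∀ p, |k p| ≤ C) (hf : MemLp f 2 μ) (hg : MemLp g 2 μ)
    (hF : ∀ n, MemLp (F n) 2 μ) (hG : ∀ n, MemLp (G n) 2 μ)
    (hFf : Tendsto (fun n => eLpNorm (F n - f) 2 μ) atTop (nhds 0))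
    (hGg : Tendsto (fun n => eLpNorm (G n - g) 2 μ) atTop (nhds 0)) :
    Tendsto (fun n => ∫ p, k p * F n p * G n p ∂μ) atTop (nhds (∫ p, k p * f p * g p ∂μ)) := by
  have h1 : Tendsto (fun n => (memLp_bdd hk hC (hF n)).toLp _) atTop
      (nhds ((memLp_bdd hk hC hf).toLp _)) := by
    rw [Lp.tendsto_Lp_iff_tendsto_eLpNorm'']
    have h0 : Tendsto (fun n => ENNReal.ofReal C * eLpNorm (F n - f) 2 μ) atTop (nhds 0) := by
      have := ENNReal.Tendsto.const_mul hFf (a := ENNReal.ofReal C) (Or.inr ENNReal.ofReal_ne_top)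
      simpa using this
    refine tendsto_of_tendsto_of_tendsto_of_le_of_le tendsto_const_nhds h0 (fun _ => zero_le)
      (fun n => ?_)
    refine eLpNorm_le_mul_eLpNorm_of_ae_le_mul (Eventually.of_forall fun p => ?_) 2
    simp only [Pi.sub_apply]
    rw [← mul_sub, norm_mul]
    exact mul_le_mul_of_nonneg_right (hC p) (norm_nonneg _)
  have h2 : Tendsto (fun n => (hG n).toLp _) atTop (nhds (hg.toLp _)) := by
    rw [Lp.tendsto_Lp_iff_tendsto_eLpNorm'']; exact hGg
  have key : ∀ (A B : α → ℝ) (hA : MemLp A 2 μ) (hB : MemLp B 2 μ),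
      inner ℝ (hB.toLp B) (hA.toLp A) = ∫ p, A p * B p ∂μ := by
    intro A B hA hB
    rw [L2.inner_def]
    refine integral_congr_ae ?_
    filter_upwards [hA.coeFn_toLp, hB.coeFn_toLp] with p h1 h2
    rw [h1, h2]; simp
  have h3 := h2.inner (𝕜 := ℝ) h1
  simp only [key] at h3
  exact h3

/-- One-sided mollifiers: kernels concentrating at the origin and supported in balls around points
of the positive `x`-axis, narrow enough (relative to the Lipschitz constant `K`) that mollifying
at a point of the closure of `Ω` only involves values in `Ω`. -/
lemma exists_kernels (K : NNReal) : ∃ (ρ : ℕ → ℝ × ℝ → ℝ) (h ε : ℕ → ℝ),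
    (∀ n, ContDiff ℝ (⊤ : ℕ∞) (ρ n)) ∧ (∀ n, HasCompactSupport (ρ n)) ∧
    (∀ n q, 0 ≤ ρ n q) ∧ (∀ n, ∫ q, ρ n q = 1) ∧
    (∀ n, tsupport (ρ n) ⊆ Metric.closedBall ((h n, 0) : ℝ × ℝ) (ε n)) ∧
    (∀ n, 0 < ε n ∧ (K + 1) * ε n < h n ∧ h n ≤ 1) ∧ Tendsto h atTop (nhds 0) := by
  set h : ℕ → ℝ := fun n => 1 / ((n : ℝ) + 1)
  have hh : ∀ n, 0 < h n := fun n => by positivity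
  have hK : (0 : ℝ) < K + 1 := by positivity
  let φ : ∀ n, ContDiffBump ((h n, 0) : ℝ × ℝ) := fun n =>
    ⟨h n / (4 * (K + 1)), h n / (2 * (K + 1)), by have := hh n; positivity, by
      have := hh n
      gcongr; norm_num⟩
  refine ⟨fun n => (φ n).normed volume, h, fun n => h n / (2 * (K + 1)), fun n => ?_, fun n => ?_,
    fun n q => ?_, fun n => ?_, fun n => ?_, fun n => ⟨?_, ?_, ?_⟩, ?_⟩
  · exact (φ n).contDiff_normed
  · exact (φ n).hasCompactSupport_normed
  · exact (φ n).nonneg_normed q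
  · exact (φ n).integral_normed
  · exact ((φ n).tsupport_normed_eq).le
  · have := hh n; positivity
  · have := hh n
    field_simp
    linarith
  · simp only [h]
    rw [div_le_one (by positivity)]
    have : (0 : ℝ) ≤ n := by positivity
    linarith
  · exact tendsto_one_div_add_atTop_nhds_zero_nat

/-- Mollification by kernels concentrating at the origin converges in `L²`. -/
lemma moll_tendsto {ρ : ℕ → ℝ × ℝ → ℝ} {h ε : ℕ → ℝ} {K : NNReal}
    (hs : ∀ n, ContDiff ℝ (⊤ : ℕ∞) (ρ n)) (hc : ∀ n, HasCompactSupport (ρ n))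
    (hpos : ∀ n q, 0 ≤ ρ n q) (h1 : ∀ n, ∫ q, ρ n q = 1)
    (hsup : ∀ n, tsupport (ρ n) ⊆ Metric.closedBall ((h n, 0) : ℝ × ℝ) (ε n))
    (hε : ∀ n, 0 < ε n ∧ (K + 1) * ε n < h n ∧ h n ≤ 1) (hh : Tendsto h atTop (nhds 0))
    {f : ℝ × ℝ → ℝ} (hf : MemLp f 2 volume) :
    Tendsto (fun n => eLpNorm (moll (ρ n) f - f) 2 volume) atTop (nhds 0) := by
  rw [ENNReal.tendsto_nhds_zero]
  intro e he
  have h2 := (ENNReal.tendsto_nhds_zero.1 (tendsto_translate hf)) e he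
  obtain ⟨r, hr, hball⟩ := Metric.eventually_nhds_iff.1 h2
  have h3 : ∀ᶠ n in atTop, h n < r / 2 := hh.eventually (gt_mem_nhds (by positivity))
  filter_upwards [h3] with n hn
  refine moll_close hf (hs n).continuous (hc n) (hpos n) (h1 n) fun q hq => hball ?_
  have h4 := hsup n (subset_tsupport _ hq)
  rw [Metric.mem_closedBall] at h4
  obtain ⟨e1, e2, e3⟩ := hε n
  have h5 : dist ((h n, 0) : ℝ × ℝ) 0 ≤ h n := by
    rw [dist_zero_right, Prod.norm_def]
    have : (0:ℝ) ≤ K := K.2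
    have : 0 < h n := by nlinarith
    simp [abs_of_pos this, this.le]
  have h6 : ε n ≤ h n := by
    have : (0:ℝ) ≤ K := K.2
    nlinarith
  calc dist q 0 ≤ dist q (h n, 0) + dist ((h n, 0) : ℝ × ℝ) 0 := dist_triangle _ _ _
    _ < r := by linarith

lemma moll_memLp {ρ f : ℝ × ℝ → ℝ} (hf : MemLp f 2 volume) (hs : ContDiff ℝ (⊤ : ℕ∞) ρ)
    (hc : HasCompactSupport ρ) (hpos : ∀ q, 0 ≤ ρ q) (h1 : ∫ q, ρ q = 1) :
    MemLp (moll ρ f) 2 volume := by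
  have hcont : Continuous (moll ρ f) :=
    (moll_contDiff (hf.locallyIntegrable (by norm_num)) (hs.of_le (by exact_mod_cast le_top)) hc).continuous
  have hd : MemLp (moll ρ f - f) 2 volume := by
    refine ⟨hcont.aestronglyMeasurable.sub hf.1, ?_⟩
    refine (moll_close hf hs.continuous hc hpos h1 (ε := 2 * eLpNorm f 2 volume) ?_).trans_lt ?_
    · intro q _
      have hq : MemLp (fun p => f (p - q)) 2 volume :=
        hf.comp_measurePreserving (measurePreserving_sub_right volume q)
      have e1 : eLpNorm (fun p => f (p - q)) 2 volume = eLpNorm f 2 volume :=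
        eLpNorm_comp_measurePreserving hf.1 (measurePreserving_sub_right volume q)
      refine (eLpNorm_sub_le hq.1 hf.1 (by norm_num)).trans ?_
      rw [e1, two_mul]
    · exact ENNReal.mul_lt_top (by norm_num) hf.2
  have := hd.add hf
  simpa using this

/-- The part `|y| < M` of the fresh region `Ω`. Truncation to it makes periodic functions square
integrable over the plane. -/
def Strip (v : ℝ → ℝ) (M : ℝ) : Set (ℝ × ℝ) := {p | p.1 < v p.2 ∧ |p.2| < M}

/-- At points of the closure of `Ω` the one-sided mollification commutes with weak
derivatives: the reflected kernel centred at such a point is itself supported in `Ω`. The margin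
`|y| < M - 1` keeps it in the strip as well. -/
lemma moll_deriv {ρ f g : ℝ × ℝ → ℝ} {v : ℝ → ℝ} {K : NNReal} {M h ε : ℝ} {e : ℝ × ℝ}
    (hv : LipschitzWith K v) (hf : MemLp f 2 volume)
    (hw : ∀ φ : ℝ × ℝ → ℝ, ContDiff ℝ (⊤ : ℕ∞) φ → HasCompactSupport φ → tsupport φ ⊆ Strip v M →
      (∫ p, f p * fderiv ℝ φ p e) = -∫ p, g p * φ p)
    (hs : ContDiff ℝ (⊤ : ℕ∞) ρ) (hc : HasCompactSupport ρ)
    (hsup : tsupport ρ ⊆ Metric.closedBall ((h, 0) : ℝ × ℝ) ε)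
    (hε : 0 < ε ∧ (K + 1) * ε < h ∧ h ≤ 1) {p : ℝ × ℝ} (hp : p.1 ≤ v p.2) (hpM : |p.2| < M - 1) :
    fderiv ℝ (moll ρ f) p e = moll ρ g p := by
  have hs1 : ContDiff ℝ 1 ρ := hs.of_le (by exact_mod_cast le_top)
  rw [(moll_hasFDerivAt (hf.locallyIntegrable (by norm_num)) hs1 hc p).2 e]
  have hφs : ContDiff ℝ (⊤ : ℕ∞) (fun r : ℝ × ℝ => ρ (p - r)) := hs.comp (by fun_prop)
  have hφc : HasCompactSupport (fun r : ℝ × ℝ => ρ (p - r)) :=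
    hc.comp_homeomorph (Homeomorph.subLeft p)
  have hsub : tsupport (fun r : ℝ × ℝ => ρ (p - r)) ⊆ Strip v M := by
    intro r hr
    have h1 : p - r ∈ tsupport ρ := by
      have := tsupport_comp_subset_preimage ρ (f := fun r : ℝ × ℝ => p - r) (by fun_prop)
      exact this hr
    have h2 := hsup h1
    rw [Metric.mem_closedBall, Prod.dist_eq, max_le_iff, Real.dist_eq, Real.dist_eq] at h2
    obtain ⟨h3, h4⟩ := h2
    simp only [Prod.fst_sub, Prod.snd_sub, sub_zero] at h3 h4
    have h5 := hv.dist_le_mul p.2 r.2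
    rw [Real.dist_eq, Real.dist_eq] at h5
    have hK : (0:ℝ) ≤ K := K.2
    have h6 : K * |p.2 - r.2| ≤ K * ε := by gcongr
    have h7 := abs_le.1 h3
    have h8 := le_abs_self (v p.2 - v r.2)
    constructor
    · nlinarith [hε.2.1]
    · have : |r.2| ≤ |p.2| + |p.2 - r.2| := by
        have := abs_sub_abs_le_abs_sub r.2 p.2
        rw [abs_sub_comm r.2] at this; linarith
      nlinarith [hε.2.1, hε.2.2, hε.1]
  have key := hw _ hφs hφc hsub
  have hd : ∀ r, fderiv ℝ (fun r : ℝ × ℝ => ρ (p - r)) r e = - fderiv ℝ ρ (p - r) e := by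
    intro r
    have h1 : HasFDerivAt (fun r : ℝ × ℝ => ρ (p - r)) _ r :=
      (hs1.differentiable one_ne_zero (p - r)).hasFDerivAt.comp r
        ((hasFDerivAt_id r).const_sub p)
    rw [h1.fderiv]; simp
  simp only [hd, mul_neg, integral_neg, neg_inj] at key
  rw [key]; rfl

/-! ### The energy inequality -/

lemma Omg_measurable {v : ℝ → ℝ} (hv : Continuous v) : MeasurableSet (Omg v) :=
  (isOpen_lt continuous_fst (hv.comp continuous_snd)).measurableSet

lemma hasCompactSupport_slice {G : ℝ × ℝ → ℝ} (hc : HasCompactSupport G) (y : ℝ) :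
    HasCompactSupport (fun x => G (x, y)) := by
  refine HasCompactSupport.of_support_subset_isCompact (hc.isCompact.image continuous_fst) ?_
  intro x hx
  exact ⟨(x, y), subset_tsupport _ hx, rfl⟩

/-- Integrating an `x`-derivative over `Ω` line by line leaves only the values on the boundary
`x = v(y)`; the weight `b` does not depend on `x`. -/
lemma trace_nonneg {G : ℝ × ℝ → ℝ} {b v : ℝ → ℝ} {C : ℝ} (hG : ContDiff ℝ 1 G)
    (hc : HasCompactSupport G) (hv : Continuous v) (hb : Measurable b) (hb0 : ∀ y, 0 ≤ b y)
    (hbC : ∀ y, |b y| ≤ C) (hG0 : ∀ y, 0 ≤ G (v y, y)) :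
    0 ≤ ∫ p in Omg v, b p.2 * fderiv ℝ G p (1, 0) := by
  have hΩ := Omg_measurable hv
  have hcont : Continuous (fun p => fderiv ℝ G p (1, 0)) :=
    (hG.continuous_fderiv one_ne_zero).clm_apply continuous_const
  have hcs : HasCompactSupport (fun p => fderiv ℝ G p (1, 0)) :=
    (hc.fderiv (𝕜 := ℝ)).mono (fun p hp => by
      simp only [Function.mem_support] at hp ⊢
      intro h0; simp [h0] at hp)
  have hint : Integrable (fun p : ℝ × ℝ => b p.2 * fderiv ℝ G p (1, 0)) volume :=
    (hcont.integrable_of_hasCompactSupport hcs).bdd_mul (c := C)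
      (hb.comp measurable_snd).aestronglyMeasurable (Eventually.of_forall fun p => hbC p.2)
  rw [← integral_indicator hΩ]
  have hint2 := hint.indicator hΩ
  rw [Measure.volume_eq_prod] at hint2 ⊢
  rw [integral_prod_symm _ hint2]
  refine integral_nonneg fun y => ?_
  have e1 : ∀ x, (Omg v).indicator (fun p : ℝ × ℝ => b p.2 * fderiv ℝ G p (1, 0)) (x, y) =
      (Set.Iio (v y)).indicator (fun x => b y * fderiv ℝ G (x, y) (1, 0)) x := by
    intro x
    by_cases h : x < v y
    · rw [Set.indicator_of_mem (show (x, y) ∈ Omg v from h),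
        Set.indicator_of_mem (show x ∈ Set.Iio (v y) from h)]
    · rw [Set.indicator_of_notMem (show (x, y) ∉ Omg v from h),
        Set.indicator_of_notMem (show x ∉ Set.Iio (v y) from h)]
  simp only [e1]
  rw [integral_indicator measurableSet_Iio, integral_const_mul]
  refine mul_nonneg (hb0 y) ?_
  have hsl : ContDiff ℝ 1 (fun x => G (x, y)) := hG.comp (by fun_prop)
  have hder : ∀ x, fderiv ℝ G (x, y) (1, 0) = deriv (fun x => G (x, y)) x := by
    intro x
    have h1 : HasDerivAt (fun x : ℝ => (x, y)) ((1 : ℝ), (0 : ℝ)) x :=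
      (hasDerivAt_id x).prodMk (hasDerivAt_const x y)
    exact ((hG.differentiable one_ne_zero (x, y)).hasFDerivAt.comp_hasDerivAt x h1).deriv.symm
  simp only [hder]
  rw [← integral_Iic_eq_integral_Iio, (hasCompactSupport_slice hc y).integral_Iic_deriv_eq hsl]
  exact hG0 y

/-- The energy inequality: the equation tested with `η f`, where the boundary term produced by
the convection is nonnegative and dropped. -/
lemma energy {f fx fy η : ℝ × ℝ → ℝ} {a b v : ℝ → ℝ} {K : NNReal} {M C c : ℝ}
    (hv : LipschitzWith K v) (hf : MemLp f 2 volume) (hfx : MemLp fx 2 volume)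
    (hfy : MemLp fy 2 volume) (hc : 0 < c)
    (hwx : ∀ φ : ℝ × ℝ → ℝ, ContDiff ℝ (⊤ : ℕ∞) φ → HasCompactSupport φ → tsupport φ ⊆ Strip v M →
      (∫ p, f p * fderiv ℝ φ p (1, 0)) = -∫ p, fx p * φ p)
    (hwy : ∀ φ : ℝ × ℝ → ℝ, ContDiff ℝ (⊤ : ℕ∞) φ → HasCompactSupport φ → tsupport φ ⊆ Strip v M →
      (∫ p, f p * fderiv ℝ φ p (0, 1)) = -∫ p, fy p * φ p)
    (hE : ∀ φ : ℝ × ℝ → ℝ, ContDiff ℝ 1 φ → HasCompactSupport φ →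
      (∀ p ∈ tsupport φ, |p.2| < M) → (∫ p in Omg v, (c * b p.2 * fx p * φ p +
        a p.2 * (fx p * fderiv ℝ φ p (1, 0) + fy p * fderiv ℝ φ p (0, 1)))) = 0)
    (ha : Measurable a) (haC : ∀ y, |a y| ≤ C) (hb : Measurable b) (hbC : ∀ y, |b y| ≤ C)
    (hb0 : ∀ y, 0 ≤ b y)
    (hη : ContDiff ℝ 1 η) (hηc : HasCompactSupport η) (hηM : ∀ p ∈ tsupport η, |p.2| < M - 1)
    (hη0 : ∀ y, 0 ≤ η (v y, y)) :
    Integrable (fun p => a p.2 * η p * (fx p ^ 2 + fy p ^ 2) + a p.2 * f p *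
      (fx p * fderiv ℝ η p (1, 0) + fy p * fderiv ℝ η p (0, 1)) -
      c / 2 * b p.2 * f p ^ 2 * fderiv ℝ η p (1, 0)) (volume.restrict (Omg v)) ∧
    (∫ p in Omg v, (a p.2 * η p * (fx p ^ 2 + fy p ^ 2) + a p.2 * f p *
      (fx p * fderiv ℝ η p (1, 0) + fy p * fderiv ℝ η p (0, 1)) -
      c / 2 * b p.2 * f p ^ 2 * fderiv ℝ η p (1, 0))) ≤ 0 := by
  have hΩ := Omg_measurable hv.continuous
  set μ := (volume : Measure (ℝ × ℝ)).restrict (Omg v) with hμ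
  obtain ⟨ρ, h, ε, hs, hcs, hpos, h1, hsup, hε, hh⟩ := exists_kernels K
  have hlim : ∀ {g}, MemLp g 2 volume →
      Tendsto (fun n => eLpNorm (moll (ρ n) g - g) 2 μ) atTop (nhds 0) := fun {g} hg =>
    tendsto_of_tendsto_of_tendsto_of_le_of_le tendsto_const_nhds
      (moll_tendsto hs hcs hpos h1 hsup hε hh hg) (fun _ => zero_le)
      (fun n => eLpNorm_mono_measure _ Measure.restrict_le_self)
  have hmem : ∀ {g}, MemLp g 2 volume → ∀ n, MemLp (moll (ρ n) g) 2 μ := fun {g} hg n =>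
    (moll_memLp hg (hs n) (hcs n) (hpos n) (h1 n)).restrict _
  have hf' : MemLp f 2 μ := hf.restrict _
  have hfx' : MemLp fx 2 μ := hfx.restrict _
  have hfy' : MemLp fy 2 μ := hfy.restrict _
  have hconst : ∀ g : ℝ × ℝ → ℝ, Tendsto (fun _ : ℕ => eLpNorm (g - g) 2 μ) atTop (nhds 0) := by
    intro g; simp
  -- bounds for the cutoff and its derivatives
  have hηcont : ∀ e, Continuous (fun p => fderiv ℝ η p e) := fun e =>
    (hη.continuous_fderiv one_ne_zero).clm_apply continuous_const
  have hηcs : ∀ e, HasCompactSupport (fun p => fderiv ℝ η p e) := fun e =>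
    (hηc.fderiv (𝕜 := ℝ)).mono (fun p hp => by
      simp only [Function.mem_support] at hp ⊢
      intro h0; simp [h0] at hp)
  obtain ⟨B0, hB0⟩ := hηc.exists_bound_of_continuous hη.continuous
  obtain ⟨Bx, hBx⟩ := (hηcs (1, 0)).exists_bound_of_continuous (hηcont _)
  obtain ⟨By, hBy⟩ := (hηcs (0, 1)).exists_bound_of_continuous (hηcont _)
  have hC0 : 0 ≤ C := (abs_nonneg _).trans (haC 0)
  have mul_bd : ∀ {s t S T : ℝ}, |s| ≤ S → |t| ≤ T → |s * t| ≤ S * T := fun {s t S T} h h' => by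
    rw [abs_mul]; exact mul_le_mul h h' (abs_nonneg _) ((abs_nonneg _).trans h)
  have ham : Measurable (fun p : ℝ × ℝ => a p.2) := ha.comp measurable_snd
  have hbm : Measurable (fun p : ℝ × ℝ => b p.2) := hb.comp measurable_snd
  have k1m : Measurable (fun p : ℝ × ℝ => b p.2 * η p) := hbm.mul hη.continuous.measurable
  have k1b : ∀ p : ℝ × ℝ, |b p.2 * η p| ≤ C * B0 := fun p => mul_bd (hbC _) (hB0 p)
  have k2m : Measurable (fun p : ℝ × ℝ => a p.2 * η p) := ham.mul hη.continuous.measurable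
  have k2b : ∀ p : ℝ × ℝ, |a p.2 * η p| ≤ C * B0 := fun p => mul_bd (haC _) (hB0 p)
  have k3m : Measurable (fun p : ℝ × ℝ => a p.2 * fderiv ℝ η p (1, 0)) :=
    ham.mul (hηcont _).measurable
  have k3b : ∀ p : ℝ × ℝ, |a p.2 * fderiv ℝ η p (1, 0)| ≤ C * Bx := fun p => mul_bd (haC _) (hBx p)
  have k4m : Measurable (fun p : ℝ × ℝ => a p.2 * fderiv ℝ η p (0, 1)) :=
    ham.mul (hηcont _).measurable
  have k4b : ∀ p : ℝ × ℝ, |a p.2 * fderiv ℝ η p (0, 1)| ≤ C * By := fun p => mul_bd (haC _) (hBy p)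
  have k5m : Measurable (fun p : ℝ × ℝ => b p.2 * fderiv ℝ η p (1, 0)) :=
    hbm.mul (hηcont _).measurable
  have k5b : ∀ p : ℝ × ℝ, |b p.2 * fderiv ℝ η p (1, 0)| ≤ C * Bx := fun p => mul_bd (hbC _) (hBx p)
  -- smoothness of the test functions
  have hPs : ∀ n, ContDiff ℝ 1 (moll (ρ n) f) := fun n =>
    moll_contDiff (hf.locallyIntegrable (by norm_num)) ((hs n).of_le (by exact_mod_cast le_top))
      (hcs n)
  have hPd : ∀ n p, DifferentiableAt ℝ (moll (ρ n) f) p := fun n p =>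
    (hPs n).differentiable one_ne_zero p
  have hηd : ∀ p, DifferentiableAt ℝ η p := hη.differentiable one_ne_zero
  have hQ : ∀ n, ∀ p ∈ Omg v, η p ≠ 0 → fderiv ℝ (moll (ρ n) f) p (1, 0) = moll (ρ n) fx p :=
    fun n p hp h0 => moll_deriv hv hf hwx (hs n) (hcs n) (hsup n) (hε n) (le_of_lt hp)
      (hηM p (subset_tsupport _ h0))
  have hR : ∀ n, ∀ p ∈ Omg v, η p ≠ 0 → fderiv ℝ (moll (ρ n) f) p (0, 1) = moll (ρ n) fy p :=
    fun n p hp h0 => moll_deriv hv hf hwy (hs n) (hcs n) (hsup n) (hε n) (le_of_lt hp)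
      (hηM p (subset_tsupport _ h0))
  -- the equation tested with `η` times the mollification of `f`
  have eq1 : ∀ n, c * (∫ p, b p.2 * η p * fx p * moll (ρ n) f p ∂μ) +
      (∫ p, a p.2 * η p * fx p * moll (ρ n) fx p ∂μ) +
      (∫ p, a p.2 * η p * fy p * moll (ρ n) fy p ∂μ) +
      (∫ p, a p.2 * fderiv ℝ η p (1, 0) * fx p * moll (ρ n) f p ∂μ) +
      (∫ p, a p.2 * fderiv ℝ η p (0, 1) * fy p * moll (ρ n) f p ∂μ) = 0 := by
    intro n
    have h2 := hE (fun p => η p * moll (ρ n) f p) (hη.mul (hPs n)) hηc.mul_right (by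
      intro p hp
      have := hηM p (closure_mono (Function.support_mul_subset_left _ _) hp)
      linarith)
    refine Eq.trans ?_ h2
    rw [← integral_const_mul, ← integral_add, ← integral_add, ← integral_add, ← integral_add]
    · refine setIntegral_congr_fun hΩ fun p hp => ?_
      rw [fderiv_fun_mul (hηd p) (hPd n p)]
      simp only [_root_.add_apply, _root_.smul_apply, smul_eq_mul]
      by_cases h0 : η p = 0
      · rw [h0]; ring
      · rw [hQ n p hp h0, hR n p hp h0]; ring
    · exact (((integrable_bdd k1m k1b hfx' (hmem hf n)).const_mul c).add
        (integrable_bdd k2m k2b hfx' (hmem hfx n))).add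
        (integrable_bdd k2m k2b hfy' (hmem hfy n)) |>.add
        (integrable_bdd k3m k3b hfx' (hmem hf n))
    · exact integrable_bdd k4m k4b hfy' (hmem hf n)
    · exact (((integrable_bdd k1m k1b hfx' (hmem hf n)).const_mul c).add
        (integrable_bdd k2m k2b hfx' (hmem hfx n))).add
        (integrable_bdd k2m k2b hfy' (hmem hfy n))
    · exact integrable_bdd k3m k3b hfx' (hmem hf n)
    · exact (((integrable_bdd k1m k1b hfx' (hmem hf n)).const_mul c).add
        (integrable_bdd k2m k2b hfx' (hmem hfx n)))
    · exact integrable_bdd k2m k2b hfy' (hmem hfy n)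
    · exact (integrable_bdd k1m k1b hfx' (hmem hf n)).const_mul c
    · exact integrable_bdd k2m k2b hfx' (hmem hfx n)
  have lim1 := ((((tendsto_bdd k1m k1b hfx' hf' (fun _ => hfx') (hmem hf) (hconst fx)
    (hlim hf)).const_mul c).add
    (tendsto_bdd k2m k2b hfx' hfx' (fun _ => hfx') (hmem hfx) (hconst fx) (hlim hfx))).add
    (tendsto_bdd k2m k2b hfy' hfy' (fun _ => hfy') (hmem hfy) (hconst fy) (hlim hfy))).add
    (tendsto_bdd k3m k3b hfx' hf' (fun _ => hfx') (hmem hf) (hconst fx) (hlim hf)) |>.add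
    (tendsto_bdd k4m k4b hfy' hf' (fun _ => hfy') (hmem hf) (hconst fy) (hlim hf))
  simp only [eq1] at lim1
  have id1 := tendsto_nhds_unique lim1 tendsto_const_nhds
  -- nonnegativity of the boundary term
  have eq2 : ∀ n, 0 ≤ 2 * (∫ p, b p.2 * η p * moll (ρ n) fx p * moll (ρ n) f p ∂μ) +
      (∫ p, b p.2 * fderiv ℝ η p (1, 0) * moll (ρ n) f p * moll (ρ n) f p ∂μ) := by
    intro n
    have h2 := trace_nonneg (G := fun p => η p * (moll (ρ n) f p * moll (ρ n) f p))
      (hη.mul ((hPs n).mul (hPs n))) hηc.mul_right hv.continuous hb hb0 hbC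
      (fun y => mul_nonneg (hη0 y) (mul_self_nonneg _))
    refine h2.trans (le_of_eq ?_)
    rw [← integral_const_mul, ← integral_add]
    · refine setIntegral_congr_fun hΩ fun p hp => ?_
      rw [fderiv_fun_mul (hηd p) ((hPd n p).fun_mul (hPd n p)), fderiv_fun_mul (hPd n p) (hPd n p)]
      simp only [_root_.add_apply, _root_.smul_apply, smul_eq_mul]
      by_cases h0 : η p = 0
      · rw [h0]; ring
      · rw [hQ n p hp h0]; ring
    · exact (integrable_bdd k1m k1b (hmem hfx n) (hmem hf n)).const_mul 2
    · exact integrable_bdd k5m k5b (hmem hf n) (hmem hf n)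
  have lim2 := ((tendsto_bdd k1m k1b hfx' hf' (hmem hfx) (hmem hf) (hlim hfx)
    (hlim hf)).const_mul 2).add
    (tendsto_bdd k5m k5b hf' hf' (hmem hf) (hmem hf) (hlim hf) (hlim hf))
  have id2 := ge_of_tendsto' lim2 eq2
  -- combination of the two limits
  have i1 := integrable_bdd k1m k1b hfx' hf'
  have i2 := integrable_bdd k2m k2b hfx' hfx'
  have i3 := integrable_bdd k2m k2b hfy' hfy'
  have i4 := integrable_bdd k3m k3b hfx' hf'
  have i5 := integrable_bdd k4m k4b hfy' hf'
  have i6 := integrable_bdd k5m k5b hf' hf'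
  have hfun : (fun p => a p.2 * η p * (fx p ^ 2 + fy p ^ 2) + a p.2 * f p *
      (fx p * fderiv ℝ η p (1, 0) + fy p * fderiv ℝ η p (0, 1)) -
      c / 2 * b p.2 * f p ^ 2 * fderiv ℝ η p (1, 0)) = fun p =>
      a p.2 * η p * fx p * fx p + a p.2 * η p * fy p * fy p +
      a p.2 * fderiv ℝ η p (1, 0) * fx p * f p + a p.2 * fderiv ℝ η p (0, 1) * fy p * f p -
      c / 2 * (b p.2 * fderiv ℝ η p (1, 0) * f p * f p) := by
    funext p; ring
  rw [hfun]
  refine ⟨(((i2.add i3).add i4).add i5).sub (i6.const_mul _), ?_⟩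
  rw [integral_sub (by exact ((i2.add i3).add i4).add i5) (i6.const_mul _),
    integral_add (by exact (i2.add i3).add i4) i5, integral_add (by exact i2.add i3) i4,
    integral_add i2 i3, integral_const_mul]
  have := mul_nonneg hc.le id2
  linarith

/-! ### Measurability of variational solutions -/

/-- Coefficients enter only through integrals, so they may be changed on null sets. -/
lemma IsVarSolWith.congr_coeff {Y c : ℝ} {a b g a' b' g' v : ℝ → ℝ} {u ux uy : ℝ × ℝ → ℝ}
    (h : IsVarSolWith Y a b g c v u ux uy) (ha : a =ᵐ[volume] a') (hb : b =ᵐ[volume] b')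
    (hg : g =ᵐ[volume] g') : IsVarSolWith Y a' b' g' c v u ux uy := by
  obtain ⟨h1, h2, h3, h4, h5, h6, h7, h8⟩ := h
  refine ⟨h1, h2, h3, h4, h5, h6, h7, fun φ hφ hφc => ?_⟩
  have e1 : (∫ y : ℝ, c * g y * φ (v y, y)) = ∫ y : ℝ, c * g' y * φ (v y, y) := by
    apply integral_congr_ae
    filter_upwards [hg] with y hy
    rw [hy]
  rw [← e1, ← h8 φ hφ hφc]
  apply integral_congr_ae
  have q : Measure.QuasiMeasurePreserving (Prod.snd : ℝ × ℝ → ℝ) volume volume :=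
    Measure.quasiMeasurePreserving_snd
  filter_upwards [ae_restrict_of_ae (q.ae ha), ae_restrict_of_ae (q.ae hb)] with p hpa hpb
  rw [hpa, hpb]

/-- If a linear functional represented by Bochner integrals takes a nonzero value somewhere, then
every representing integrand is integrable: a non-integrable one has integral zero by convention,
and adding a reference test function with nonzero value excludes this. -/
lemma integrable_of_additive {α V : Type*} [MeasurableSpace α] {μ : Measure α} [Add V]
    {P : V → Prop} {F : V → α → ℝ} {L : V → ℝ}
    (hP : ∀ φ ψ, P φ → P ψ → P (φ + ψ)) (hF : ∀ φ ψ, P φ → P ψ → F (φ + ψ) = F φ + F ψ)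
    (hL : ∀ φ ψ, P φ → P ψ → L (φ + ψ) = L φ + L ψ) (hI : ∀ φ, P φ → ∫ p, F φ p ∂μ = L φ)
    {φ₀ : V} (h0 : P φ₀) (h0' : L φ₀ ≠ 0) {φ : V} (hφ : P φ) : Integrable (F φ) μ := by
  have key : ∀ ψ, P ψ → L ψ ≠ 0 → Integrable (F ψ) μ := fun ψ h h' => by
    by_contra hn
    exact h' (by rw [← hI ψ h, integral_undef hn])
  by_cases h : L φ = 0
  · have h1 := key (φ + φ₀) (hP _ _ hφ h0) (by rw [hL _ _ hφ h0, h, zero_add]; exact h0')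
    have h2 := h1.sub (key φ₀ h0 h0')
    rw [hF _ _ hφ h0] at h2
    simpa using h2
  · exact key φ hφ h

lemma integrable_trace {φ : ℝ × ℝ → ℝ} {k v : ℝ → ℝ} {C : ℝ} (hφ : Continuous φ)
    (hφc : HasCompactSupport φ) (hv : Continuous v) (hk : Measurable k) (hC : ∀ y, |k y| ≤ C) :
    Integrable (fun y => k y * φ (v y, y)) volume := by
  have hs : HasCompactSupport (fun y => φ (v y, y)) := by
    apply HasCompactSupport.intro (K := Prod.snd '' tsupport φ) (hφc.isCompact.image continuous_snd)
    intro y hy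
    by_contra h
    exact hy ⟨(v y, y), subset_tsupport _ h, rfl⟩
  have h1 : Integrable (fun y => φ (v y, y)) volume :=
    Continuous.integrable_of_hasCompactSupport (by fun_prop) hs
  exact h1.bdd_mul (c := C) hk.aestronglyMeasurable (Eventually.of_forall fun y => hC y)

/-- The right-hand side of the equation does not vanish identically. -/
lemma exists_trace_pos {g v : ℝ → ℝ} {c gm gM : ℝ} (hv : Continuous v) (hg : Measurable g)
    (hgm : 0 < gm) (hg1 : ∀ y, gm ≤ g y) (hg2 : ∀ y, g y ≤ gM) (hc : 0 < c) :
    ∃ φ : ℝ × ℝ → ℝ, ContDiff ℝ 1 φ ∧ HasCompactSupport φ ∧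
      (∫ y : ℝ, c * g y * φ (v y, y)) ≠ 0 := by
  let f : ContDiffBump ((v 0, 0) : ℝ × ℝ) := ⟨1, 2, one_pos, by norm_num⟩
  refine ⟨f, f.contDiff, f.hasCompactSupport, ne_of_gt ?_⟩
  have hi := integrable_trace (k := fun y => c * g y) (C := c * gM) f.continuous
    f.hasCompactSupport hv (hg.const_mul c) (fun y => by
      rw [abs_of_pos (mul_pos hc (hgm.trans_le (hg1 y)))]
      exact mul_le_mul_of_nonneg_left (hg2 y) hc.le)
  rw [integral_pos_iff_support_of_nonneg (fun y => mul_nonneg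
    (mul_pos hc (hgm.trans_le (hg1 y))).le f.nonneg) hi]
  have hopen : IsOpen {y : ℝ | (v y, y) ∈ Metric.ball ((v 0, 0) : ℝ × ℝ) 1} :=
    Metric.isOpen_ball.preimage (by fun_prop)
  refine (hopen.measure_pos volume ⟨0, ?_⟩).trans_le (measure_mono fun y hy => ?_)
  · exact Metric.mem_ball_self one_pos
  · have := f.one_of_mem_closedBall (Metric.ball_subset_closedBall hy)
    simp only [Function.mem_support, this, mul_one]
    exact (mul_pos hc (hgm.trans_le (hg1 y))).ne'

lemma integrableOn_bdd {α : Type*} [MeasurableSpace α] {μ : Measure α} {k F : α → ℝ} {C : ℝ}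
    {S : Set α} (hS : MeasurableSet S) (hk : Measurable k) (hC : ∀ p ∈ S, |k p| ≤ C)
    (hF : IntegrableOn F S μ) : IntegrableOn (fun p => k p * F p) S μ :=
  Integrable.bdd_mul (c := C) hF hk.aestronglyMeasurable
    ((ae_restrict_iff' hS).2 (Eventually.of_forall fun p hp => hC p hp))

/-- A linear function times a cutoff equal to `1` near a given point, used to isolate single
factors in an integrand. -/
lemma exists_local_test (p : ℝ × ℝ) (l : ℝ × ℝ →L[ℝ] ℝ) (m r : ℝ) (hr : 0 < r) :
    ∃ φ : ℝ × ℝ → ℝ, ContDiff ℝ (⊤ : ℕ∞) φ ∧ HasCompactSupport φ ∧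
      tsupport φ ⊆ Metric.closedBall p r ∧
      (∀ q ∈ Metric.ball p (r / 2), φ q = l q + m) ∧
      (∀ q ∈ Metric.ball p (r / 2), fderiv ℝ φ q = l) := by
  let f : ContDiffBump p := ⟨r / 2, r, half_pos hr, half_lt_self hr⟩
  have h1 : ∀ q ∈ Metric.ball p (r / 2), (fun q => (l q + m) * f q) =ᶠ[nhds q] fun q => l q + m := by
    intro q hq
    filter_upwards [f.eventuallyEq_one_of_mem_ball hq] with z hz
    rw [hz]; simp
  refine ⟨fun q => (l q + m) * f q, ?_, f.hasCompactSupport.mul_left, ?_, fun q hq => (h1 q hq).eq_of_nhds,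
    fun q hq => ?_⟩
  · exact (l.contDiff.add contDiff_const).mul f.contDiff
  · rw [← f.tsupport_eq]
    exact closure_mono (Function.support_mul_subset_right _ _)
  · rw [(h1 q hq).fderiv_eq, fderiv_add_const, l.fderiv]

section Regularity
variable {Y c am aM bm bM gm gM : ℝ} {a b g v : ℝ → ℝ} {u ux uy : ℝ × ℝ → ℝ}

/-- The integrand of the variational equation is integrable for every test function, although only
the value of its Bochner integral is prescribed. -/
lemma IsVarSolWith.integrable_form (h : IsVarSolWith Y a b g c v u ux uy)
    (hv : Continuous v) (hg : Measurable g) (hc : 0 < c)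
    (hgm : 0 < gm) (hg1 : ∀ y, gm ≤ g y) (hg2 : ∀ y, g y ≤ gM) {φ : ℝ × ℝ → ℝ}
    (hφ : ContDiff ℝ 1 φ) (hφc : HasCompactSupport φ) :
    IntegrableOn (fun p => c * b p.2 * ux p * φ p +
      a p.2 * (ux p * fderiv ℝ φ p (1, 0) + uy p * fderiv ℝ φ p (0, 1))) (Omg v) := by
  obtain ⟨φ₀, h1, h2, h3⟩ := exists_trace_pos hv hg hgm hg1 hg2 hc
  refine integrable_of_additive (μ := volume.restrict (Omg v))
    (P := fun φ : ℝ × ℝ → ℝ => ContDiff ℝ 1 φ ∧ HasCompactSupport φ)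
    (F := fun φ p => c * b p.2 * ux p * φ p +
      a p.2 * (ux p * fderiv ℝ φ p (1, 0) + uy p * fderiv ℝ φ p (0, 1)))
    (L := fun φ => ∫ y : ℝ, c * g y * φ (v y, y))
    (fun φ ψ hφ hψ => ⟨hφ.1.add hψ.1, hφ.2.add hψ.2⟩) (fun φ ψ hφ hψ => ?_)
    (fun φ ψ hφ hψ => ?_) (fun φ hφ => h.2.2.2.2.2.2.2 φ hφ.1 hφ.2) ⟨h1, h2⟩ h3 ⟨hφ, hφc⟩
  · ext p
    simp only [Pi.add_apply]
    rw [fderiv_add (hφ.1.differentiable one_ne_zero p) (hψ.1.differentiable one_ne_zero p)]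
    simp only [_root_.add_apply]
    ring
  · have i : ∀ χ : ℝ × ℝ → ℝ, ContDiff ℝ 1 χ ∧ HasCompactSupport χ →
        Integrable (fun y => c * g y * χ (v y, y)) volume := fun χ hχ =>
      integrable_trace (k := fun y => c * g y) (C := c * gM) hχ.1.continuous hχ.2 hv
        (hg.const_mul c) (fun y => by
          rw [abs_of_pos (mul_pos hc (hgm.trans_le (hg1 y)))]
          exact mul_le_mul_of_nonneg_left (hg2 y) hc.le)
    rw [← integral_add (i φ hφ) (i ψ hψ)]
    simp only [Pi.add_apply, mul_add]

/-- Near any point, a test function equal to `1` isolates `ux` in the integrand of the equation, and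
one equal to `y` then isolates `uy`. -/
lemma IsVarSolWith.locallyIntegrable (h : IsVarSolWith Y a b g c v u ux uy)
    (hv : Continuous v) (ha : Measurable a) (hb : Measurable b) (hg : Measurable g) (hc : 0 < c)
    (ham : 0 < am) (ha1 : ∀ y, am ≤ a y) (hbm : 0 < bm) (hb1 : ∀ y, bm ≤ b y)
    (hgm : 0 < gm) (hg1 : ∀ y, gm ≤ g y) (hg2 : ∀ y, g y ≤ gM) :
    LocallyIntegrable ux (volume.restrict (Omg v)) ∧
      LocallyIntegrable uy (volume.restrict (Omg v)) := by
  have key : ∀ p : ℝ × ℝ, IntegrableOn ux (Metric.ball p 1) (volume.restrict (Omg v)) ∧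
      IntegrableOn uy (Metric.ball p 1) (volume.restrict (Omg v)) := by
    intro p
    obtain ⟨φ, h1, h2, -, h4, h5⟩ := exists_local_test p 0 1 2 two_pos
    obtain ⟨ψ, k1, k2, -, k4, k5⟩ := exists_local_test p (ContinuousLinearMap.snd ℝ ℝ ℝ) 0 2 two_pos
    have i1 : IntegrableOn _ (Metric.ball p 1) (volume.restrict (Omg v)) :=
      (h.integrable_form hv hg hc hgm hg1 hg2 (h1.of_le (by exact_mod_cast le_top)) h2).integrableOn
    have i2 : IntegrableOn _ (Metric.ball p 1) (volume.restrict (Omg v)) :=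
      (h.integrable_form hv hg hc hgm hg1 hg2 (k1.of_le (by exact_mod_cast le_top)) k2).integrableOn
    have hB : MeasurableSet (Metric.ball p 1) := Metric.isOpen_ball.measurableSet
    have j1 : IntegrableOn ux (Metric.ball p 1) (volume.restrict (Omg v)) := by
      have := integrableOn_bdd (k := fun p => (c * b p.2)⁻¹) (C := (c * bm)⁻¹) hB
        (by fun_prop) (fun q _ => by
          rw [abs_of_pos (inv_pos.2 (mul_pos hc (hbm.trans_le (hb1 _))))]
          have := hb1 q.2
          gcongr) i1
      refine this.congr_fun (fun q hq => ?_) hB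
      have hq' : q ∈ Metric.ball p (2 / 2) := by simpa using hq
      have : b q.2 ≠ 0 := (hbm.trans_le (hb1 _)).ne'
      simp only [h4 q hq', h5 q hq']
      simp
      field_simp
    refine ⟨j1, ?_⟩
    have j2 := integrableOn_bdd (k := fun p => (a p.2)⁻¹ ) (C := am⁻¹) hB
        (by fun_prop) (fun q _ => by
          rw [abs_of_pos (inv_pos.2 (ham.trans_le (ha1 _)))]
          have := ha1 q.2
          gcongr) (i2.sub (integrableOn_bdd (k := fun p => p.2) (C := |p.2| + 1) hB (by fun_prop)
            (fun q hq => by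
              have : dist q.2 p.2 < 1 := lt_of_le_of_lt (le_max_right _ _) hq
              rw [Real.dist_eq] at this
              have := abs_sub_abs_le_abs_sub q.2 p.2
              linarith) i1))
    refine j2.congr_fun (fun q hq => ?_) hB
    have hq' : q ∈ Metric.ball p (2 / 2) := by simpa using hq
    have : a q.2 ≠ 0 := (ham.trans_le (ha1 _)).ne'
    simp only [Pi.sub_apply, h4 q hq', h5 q hq', k4 q hq', k5 q hq']
    simp
    field_simp
    ring
  exact ⟨fun p => ⟨_, Metric.ball_mem_nhds p one_pos, (key p).1⟩,
    fun p => ⟨_, Metric.ball_mem_nhds p one_pos, (key p).2⟩⟩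

/-- If the distributional derivative of `u` in the direction `e` is represented by a locally
integrable function that does not vanish as a distribution on `Ω`, then `u` is measurable there. -/
lemma aesm_of_weak {w : ℝ × ℝ → ℝ} {e : ℝ × ℝ} {l : ℝ × ℝ →L[ℝ] ℝ} (hl : l e = 1)
    (hv : Continuous v) (hw : LocallyIntegrable w (volume.restrict (Omg v)))
    (hd : ∀ φ : ℝ × ℝ → ℝ, ContDiff ℝ (⊤ : ℕ∞) φ → HasCompactSupport φ → tsupport φ ⊆ Omg v →
      (∫ p in Omg v, u p * fderiv ℝ φ p e) = (-∫ p in Omg v, w p * φ p))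
    (hn : ∃ φ : ℝ × ℝ → ℝ, ContDiff ℝ (⊤ : ℕ∞) φ ∧ HasCompactSupport φ ∧ tsupport φ ⊆ Omg v ∧
      (∫ p in Omg v, w p * φ p) ≠ 0) :
    AEStronglyMeasurable u (volume.restrict (Omg v)) := by
  have hO : IsOpen (Omg v) := isOpen_lt (by fun_prop) (by fun_prop)
  obtain ⟨φ₀, h1, h2, h3, h4⟩ := hn
  have iw : ∀ φ : ℝ × ℝ → ℝ, ContDiff ℝ (⊤ : ℕ∞) φ → HasCompactSupport φ →
      Integrable (fun p => w p * φ p) (volume.restrict (Omg v)) := fun φ hφ hφc => by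
    have := hw.integrable_smul_left_of_hasCompactSupport hφ.continuous hφc
    simpa [mul_comm] using this
  have iu : ∀ φ : ℝ × ℝ → ℝ, ContDiff ℝ (⊤ : ℕ∞) φ → HasCompactSupport φ → tsupport φ ⊆ Omg v →
      Integrable (fun p => u p * fderiv ℝ φ p e) (volume.restrict (Omg v)) := by
    intro φ hφ hφc hφs
    refine integrable_of_additive (μ := volume.restrict (Omg v))
      (P := fun φ : ℝ × ℝ → ℝ => ContDiff ℝ (⊤ : ℕ∞) φ ∧ HasCompactSupport φ ∧ tsupport φ ⊆ Omg v)
      (F := fun φ p => u p * fderiv ℝ φ p e)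
      (L := fun φ => -∫ p in Omg v, w p * φ p)
      (fun φ ψ hφ hψ => ⟨hφ.1.add hψ.1, hφ.2.1.add hψ.2.1,
        (tsupport_add φ ψ).trans (Set.union_subset hφ.2.2 hψ.2.2)⟩) (fun φ ψ hφ hψ => ?_)
      (fun φ ψ hφ hψ => ?_) (fun φ hφ => hd φ hφ.1 hφ.2.1 hφ.2.2) ⟨h1, h2, h3⟩
      (neg_ne_zero.2 h4) ⟨hφ, hφc, hφs⟩
    · ext p
      simp only [Pi.add_apply]
      rw [fderiv_add (hφ.1.differentiable (by simp) p) (hψ.1.differentiable (by simp) p)]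
      simp only [_root_.add_apply]
      ring
    · simp only [Pi.add_apply, mul_add]
      rw [integral_add (iw φ hφ.1 hφ.2.1) (iw ψ hψ.1 hψ.2.1)]
      ring
  have : LocallyIntegrableOn u (Omg v) volume := by
    intro p hp
    obtain ⟨r, hr, hrs⟩ := Metric.isOpen_iff.1 hO p hp
    obtain ⟨φ, k1, k2, k3, k4, k5⟩ := exists_local_test p l 0 (r / 2) (half_pos hr)
    have := iu φ k1 k2 (k3.trans ((Metric.closedBall_subset_ball (half_lt_self hr)).trans hrs))
    have hB : MeasurableSet (Metric.ball p (r / 2 / 2)) := Metric.isOpen_ball.measurableSet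
    have hs : Metric.ball p (r / 2 / 2) ⊆ Omg v :=
      (Metric.ball_subset_ball (by linarith)).trans hrs
    refine ⟨Metric.ball p (r / 2 / 2),
      mem_nhdsWithin_of_mem_nhds (Metric.ball_mem_nhds p (by positivity)), ?_⟩
    have h' : IntegrableOn _ (Metric.ball p (r / 2 / 2)) volume :=
      IntegrableOn.mono_set (t := Omg v) this hs
    refine h'.congr_fun (fun q hq => ?_) hB
    simp [k5 q hq, hl]
  exact this.aestronglyMeasurable

/-- A variational solution and its derivatives are measurable on `Ω`. The function `u` can fail to
be so only if both derivatives vanish, which the boundary source term excludes. -/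
lemma IsVarSolWith.aesm (h : IsVarSolWith Y a b g c v u ux uy)
    (hv : Continuous v) (ha : Measurable a) (hb : Measurable b) (hg : Measurable g) (hc : 0 < c)
    (ham : 0 < am) (ha1 : ∀ y, am ≤ a y) (hbm : 0 < bm) (hb1 : ∀ y, bm ≤ b y)
    (hgm : 0 < gm) (hg1 : ∀ y, gm ≤ g y) (hg2 : ∀ y, g y ≤ gM) :
    AEStronglyMeasurable u (volume.restrict (Omg v)) ∧
    AEStronglyMeasurable ux (volume.restrict (Omg v)) ∧
    AEStronglyMeasurable uy (volume.restrict (Omg v)) := by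
  obtain ⟨lx, ly⟩ := h.locallyIntegrable hv ha hb hg hc ham ha1 hbm hb1 hgm hg1 hg2
  refine ⟨?_, lx.aestronglyMeasurable, ly.aestronglyMeasurable⟩
  have hO : IsOpen (Omg v) := isOpen_lt (by fun_prop) (by fun_prop)
  have hw := h.2.2.2.2.2.2.1
  by_cases hx : ∃ φ : ℝ × ℝ → ℝ, ContDiff ℝ (⊤ : ℕ∞) φ ∧ HasCompactSupport φ ∧ tsupport φ ⊆ Omg v ∧
      (∫ p in Omg v, ux p * φ p) ≠ 0
  · exact aesm_of_weak (l := ContinuousLinearMap.fst ℝ ℝ ℝ) (e := (1, 0)) (by simp) hv lx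
      (fun φ h1 h2 h3 => (hw φ h1 h2 h3).1) hx
  by_cases hy : ∃ φ : ℝ × ℝ → ℝ, ContDiff ℝ (⊤ : ℕ∞) φ ∧ HasCompactSupport φ ∧ tsupport φ ⊆ Omg v ∧
      (∫ p in Omg v, uy p * φ p) ≠ 0
  · exact aesm_of_weak (l := ContinuousLinearMap.snd ℝ ℝ ℝ) (e := (0, 1)) (by simp) hv ly
      (fun φ h1 h2 h3 => (hw φ h1 h2 h3).2) hy
  exfalso
  push Not at hx hy
  have z : ∀ w : ℝ × ℝ → ℝ, LocallyIntegrable w (volume.restrict (Omg v)) →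
      (∀ φ : ℝ × ℝ → ℝ, ContDiff ℝ (⊤ : ℕ∞) φ → HasCompactSupport φ → tsupport φ ⊆ Omg v →
        (∫ p in Omg v, w p * φ p) = 0) → ∀ᵐ p ∂(volume.restrict (Omg v)), w p = 0 := by
    intro w lw hw
    have := hO.ae_eq_zero_of_integral_contDiff_smul_eq_zero (μ := volume.restrict (Omg v))
      (lw.locallyIntegrableOn _) (fun φ h1 h2 h3 => by
        rw [← hw φ h1 h2 h3]
        simp [mul_comm])
    filter_upwards [this, ae_restrict_mem hO.measurableSet] with p h1 h2 using h1 h2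
  obtain ⟨φ₀, h1, h2, h3⟩ := exists_trace_pos hv hg hgm hg1 hg2 hc
  rw [← h.2.2.2.2.2.2.2 φ₀ h1 h2] at h3
  apply h3
  rw [← integral_zero (ℝ × ℝ) ℝ (μ := volume.restrict (Omg v))]
  apply integral_congr_ae
  filter_upwards [z ux lx hx, z uy ly hy] with p h1 h2
  simp [h1, h2]

end Regularity

/-! ### Periodic functions and periodicity cells -/

/-- The `k`-th translate of the periodicity cell of `Ω` (with its lower edge). -/
def Blk (Y : ℝ) (v : ℝ → ℝ) (k : ℤ) : Set (ℝ × ℝ) :=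
  {p | p.1 < v p.2 ∧ (k : ℝ) * Y ≤ p.2 ∧ p.2 < ((k : ℝ) + 1) * Y}

/-- The part of `Ω` consisting of `2 n` consecutive periodicity cells. -/
def Box (Y : ℝ) (v : ℝ → ℝ) (n : ℕ) : Set (ℝ × ℝ) :=
  {p | p.1 < v p.2 ∧ -((n : ℝ) * Y) ≤ p.2 ∧ p.2 < (n : ℝ) * Y}

section Periodic
variable {Y : ℝ} {v : ℝ → ℝ} {F : ℝ × ℝ → ℝ}

lemma Blk_measurable (hv : Continuous v) (k : ℤ) : MeasurableSet (Blk Y v k) :=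
  (Omg_measurable hv).inter
    ((measurableSet_le (f := fun _ : ℝ × ℝ => (k : ℝ) * Y) (g := fun p : ℝ × ℝ => p.2)
      (by fun_prop) (by fun_prop)).inter
      (measurableSet_lt (f := fun p : ℝ × ℝ => p.2) (g := fun _ : ℝ × ℝ => ((k : ℝ) + 1) * Y)
        (by fun_prop) (by fun_prop)))

lemma Box_measurable (hv : Continuous v) (n : ℕ) : MeasurableSet (Box Y v n) :=
  (Omg_measurable hv).inter
    ((measurableSet_le (f := fun _ : ℝ × ℝ => -((n : ℝ) * Y)) (g := fun p : ℝ × ℝ => p.2)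
      (by fun_prop) (by fun_prop)).inter
      (measurableSet_lt (f := fun p : ℝ × ℝ => p.2) (g := fun _ : ℝ × ℝ => (n : ℝ) * Y)
        (by fun_prop) (by fun_prop)))

lemma Box_subset (n : ℕ) : Box Y v n ⊆ Omg v := fun _ hp => hp.1

lemma Blk_zero_ae : Blk Y v 0 =ᵐ[volume] OmgS Y v := by
  have h0 : ∀ᵐ y : ℝ, y ≠ 0 := by simp [ae_iff]
  have q : Measure.QuasiMeasurePreserving (Prod.snd : ℝ × ℝ → ℝ) volume volume :=
    Measure.quasiMeasurePreserving_snd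
  filter_upwards [q.ae h0] with p hp
  apply propext
  change (p.1 < v p.2 ∧ ((0 : ℤ) : ℝ) * Y ≤ p.2 ∧ p.2 < (((0 : ℤ) : ℝ) + 1) * Y) ↔
    (p.1 < v p.2 ∧ 0 < p.2 ∧ p.2 < Y)
  simp only [Int.cast_zero, zero_mul, zero_add, one_mul]
  exact ⟨fun h => ⟨h.1, lt_of_le_of_ne h.2.1 (Ne.symm hp), h.2.2⟩, fun h => ⟨h.1, h.2.1.le, h.2.2⟩⟩

lemma Blk_preimage (hvp : Function.Periodic v Y) (k : ℤ) :
    (fun p : ℝ × ℝ => p + (0, (k : ℝ) * Y)) ⁻¹' Blk Y v k = Blk Y v 0 := by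
  ext p
  have := hvp.int_mul k p.2
  simp only [Blk, Set.mem_preimage, Set.mem_ofPred_eq, Prod.fst_add, Prod.snd_add, add_zero, this,
    Int.cast_zero, zero_mul, zero_add, one_mul]
  constructor
  · rintro ⟨h1, h2, h3⟩; exact ⟨h1, by linarith, by linarith⟩
  · rintro ⟨h1, h2, h3⟩; exact ⟨h1, by linarith, by linarith⟩

lemma PerY.comp_translate (hF : PerY Y F) (k : ℤ) :
    (F ∘ fun p : ℝ × ℝ => p + (0, (k : ℝ) * Y)) = F := by
  ext p
  have : Function.Periodic (fun y => F (p.1, y)) Y := fun y => hF p.1 y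
  have := this.int_mul k p.2
  simpa [Prod.add_def] using this

lemma translate_mp (t : ℝ × ℝ) :
    MeasurePreserving (fun p : ℝ × ℝ => p + t) volume volume :=
  measurePreserving_add_right volume t

lemma integrableOn_Blk (hvp : Function.Periodic v Y) (hF : PerY Y F)
    (hi : IntegrableOn F (OmgS Y v)) (k : ℤ) : IntegrableOn F (Blk Y v k) := by
  rw [← (translate_mp (0, (k : ℝ) * Y)).integrableOn_comp_preimage
    (MeasurableEquiv.addRight _).measurableEmbedding, Blk_preimage hvp, hF.comp_translate]
  exact hi.congr_set_ae Blk_zero_ae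

lemma integral_Blk (hvp : Function.Periodic v Y) (hF : PerY Y F) (k : ℤ) :
    ∫ p in Blk Y v k, F p = ∫ p in OmgS Y v, F p := by
  rw [← (translate_mp (0, (k : ℝ) * Y)).setIntegral_preimage_emb
    (MeasurableEquiv.addRight _).measurableEmbedding, Blk_preimage hvp]
  have := hF.comp_translate k
  calc _ = ∫ p in Blk Y v 0, F p := by
        congr 1
    _ = _ := setIntegral_congr_set Blk_zero_ae

lemma Box_eq (hY : 0 < Y) (n : ℕ) :
    Box Y v n = ⋃ k ∈ Finset.Ico (-(n : ℤ)) n, Blk Y v k := by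
  ext p
  simp only [Box, Blk, Set.mem_iUnion, Finset.mem_Ico, Set.mem_ofPred_eq, exists_prop]
  constructor
  · rintro ⟨h1, h2, h3⟩
    have e1 : (⌊p.2 / Y⌋ : ℝ) * Y ≤ p.2 := (le_div_iff₀ hY).1 (Int.floor_le _)
    have e2 : p.2 < ((⌊p.2 / Y⌋ : ℝ) + 1) * Y := (div_lt_iff₀ hY).1 (Int.lt_floor_add_one _)
    refine ⟨⌊p.2 / Y⌋, ⟨?_, ?_⟩, h1, e1, e2⟩
    · rw [Int.le_floor, le_div_iff₀ hY]
      push_cast; linarith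
    · rw [Int.floor_lt, div_lt_iff₀ hY]
      push_cast; linarith
  · rintro ⟨k, ⟨h1, h2⟩, h3, h4, h5⟩
    have h1' : -(n : ℝ) ≤ k := by exact_mod_cast h1
    have h2' : (k : ℝ) + 1 ≤ n := by exact_mod_cast h2
    refine ⟨h3, ?_, ?_⟩ <;> nlinarith

lemma Blk_disjoint (hY : 0 < Y) {j k : ℤ} (h : j < k) : Disjoint (Blk Y v j) (Blk Y v k) := by
  rw [Set.disjoint_left]
  rintro p ⟨-, -, h1⟩ ⟨-, h2, -⟩
  have : (j : ℝ) + 1 ≤ k := by exact_mod_cast h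
  nlinarith

lemma integrableOn_Box (hY : 0 < Y) (hvp : Function.Periodic v Y)
    (hF : PerY Y F) (hi : IntegrableOn F (OmgS Y v)) (n : ℕ) : IntegrableOn F (Box Y v n) := by
  rw [Box_eq hY, integrableOn_finset_iUnion]
  exact fun k _ => integrableOn_Blk hvp hF hi k

/-- Integrals of periodic functions grow linearly with the number of cells. -/
lemma integral_Box (hY : 0 < Y) (hv : Continuous v) (hvp : Function.Periodic v Y)
    (hF : PerY Y F) (hi : IntegrableOn F (OmgS Y v)) (n : ℕ) :
    ∫ p in Box Y v n, F p = 2 * n * ∫ p in OmgS Y v, F p := by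
  rw [Box_eq hY, integral_biUnion_finset _ (fun k _ => Blk_measurable hv k)
    (fun j _ k _ hjk => ?_) (fun k _ => integrableOn_Blk hvp hF hi k)]
  · simp only [integral_Blk hvp hF, Finset.sum_const, Int.card_Ico, nsmul_eq_mul]
    have : ((n : ℤ) - -(n : ℤ)).toNat = 2 * n := by omega
    rw [this]; push_cast; ring
  · rcases lt_or_gt_of_ne hjk with h | h
    · exact Blk_disjoint hY h
    · exact (Blk_disjoint hY h).symm

lemma exists_Box (hY : 0 < Y) {p : ℝ × ℝ} (hp : p ∈ Omg v) : ∃ n : ℕ, p ∈ Box Y v n := by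
  obtain ⟨n, hn⟩ := exists_nat_gt (|p.2| / Y)
  rw [div_lt_iff₀ hY] at hn
  exact ⟨n, hp, (abs_lt.1 hn).1.le, (abs_lt.1 hn).2⟩

/-- A periodic function vanishing on one cell vanishes on `Ω`. The horizontal lines between cells form
a null set. -/
lemma ae_zero_of_cell (hY : 0 < Y) (hv : Continuous v) (hvp : Function.Periodic v Y)
    (hF : PerY Y F) (hi : IntegrableOn (fun p => F p ^ 2) (OmgS Y v))
    (h0 : ∀ᵐ p ∂(volume.restrict (OmgS Y v)), F p = 0) :
    ∀ᵐ p ∂(volume.restrict (Omg v)), F p = 0 := by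
  have hF2 : PerY Y (fun p => F p ^ 2) := fun x y => by simp only [hF x y]
  have h1 : ∀ n : ℕ, ∀ᵐ p ∂volume, p ∈ Box Y v n → F p = 0 := by
    intro n
    have e : ∫ p in Box Y v n, F p ^ 2 = 0 := by
      rw [integral_Box hY hv hvp hF2 hi n]
      have : ∫ p in OmgS Y v, F p ^ 2 = 0 := by
        rw [← integral_zero (ℝ × ℝ) ℝ (μ := volume.restrict (OmgS Y v))]
        apply integral_congr_ae
        filter_upwards [h0] with p hp
        simp [hp]
      rw [this, mul_zero]
    rw [integral_eq_zero_iff_of_nonneg (fun p => sq_nonneg _)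
      (integrableOn_Box hY hvp hF2 hi n)] at e
    rw [← ae_restrict_iff' (Box_measurable hv n)]
    filter_upwards [e] with p hp
    simpa using hp
  rw [ae_restrict_iff' (Omg_measurable hv)]
  filter_upwards [ae_all_iff.2 h1] with p hp hpO
  obtain ⟨n, hn⟩ := exists_Box hY hpO
  exact hp n hn

lemma Strip_measurable (hv : Continuous v) (M : ℝ) : MeasurableSet (Strip v M) :=
  (Omg_measurable hv).inter (measurableSet_lt (f := fun p : ℝ × ℝ => |p.2|)
    (g := fun _ : ℝ × ℝ => M) (by fun_prop) (by fun_prop))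

lemma memLp_Strip (hY : 0 < Y) (hvp : Function.Periodic v Y)
    (hF : PerY Y F) (hm : AEStronglyMeasurable F (volume.restrict (Omg v)))
    (hi : IntegrableOn (fun p => F p ^ 2) (OmgS Y v)) (M : ℝ) :
    MemLp F 2 (volume.restrict (Strip v M)) := by
  have hF2 : PerY Y (fun p => F p ^ 2) := fun x y => by simp only [hF x y]
  rw [memLp_two_iff_integrable_sq
    (hm.mono_measure (Measure.restrict_mono_set _ fun p hp => hp.1))]
  obtain ⟨n, hn⟩ := exists_nat_gt (M / Y)
  rw [div_lt_iff₀ hY] at hn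
  refine (integrableOn_Box hY hvp hF2 hi n).mono_set fun p hp => ?_
  have := abs_lt.1 (hp.2.trans hn)
  exact ⟨hp.1, this.1.le, this.2⟩

lemma integrable_mul_test (hY : 0 < Y) (hv : Continuous v) (hvp : Function.Periodic v Y)
    (hF : PerY Y F) (hm : AEStronglyMeasurable F (volume.restrict (Omg v)))
    (hi : IntegrableOn (fun p => F p ^ 2) (OmgS Y v)) {ψ : ℝ × ℝ → ℝ} (hψ : Continuous ψ)
    (hψc : HasCompactSupport ψ) : Integrable (fun p => F p * ψ p) (volume.restrict (Omg v)) := by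
  obtain ⟨M, hM⟩ := (hψc.isCompact.image (f := fun p : ℝ × ℝ => |p.2|) (by fun_prop)).bddAbove
  have h1 := memLp_Strip hY hvp hF hm hi (M + 1)
  have h2 : MemLp ψ 2 (volume.restrict (Strip v (M + 1))) :=
    (hψ.memLp_of_hasCompactSupport hψc).restrict _
  have h3 : IntegrableOn (fun p => F p * ψ p) (Strip v (M + 1)) := h1.integrable_mul h2
  refine IntegrableOn.of_forall_sdiff_eq_zero h3 (Omg_measurable hv) fun p hp => ?_
  have : p ∉ tsupport ψ := fun h => hp.2 ⟨hp.1, by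
    have := hM ⟨p, h, rfl⟩
    simp only at this
    linarith⟩
  simp [image_eq_zero_of_notMem_tsupport this]

end Periodic

/-! ### The energy inequality for periodic functions and its coercivity -/

section Periodic
variable {Y : ℝ} {v : ℝ → ℝ}

/-- The energy inequality for periodic functions, obtained by truncating them to a strip that
contains the support of the weight `η`. -/
lemma energy_periodic {w wx wy η : ℝ × ℝ → ℝ} {a b : ℝ → ℝ} {K : NNReal} {M C c : ℝ}
    (hY : 0 < Y) (hv : LipschitzWith K v) (hvp : Function.Periodic v Y)
    (hw : PerY Y w) (hwx : PerY Y wx) (hwy : PerY Y wy)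
    (mw : AEStronglyMeasurable w (volume.restrict (Omg v)))
    (mwx : AEStronglyMeasurable wx (volume.restrict (Omg v)))
    (mwy : AEStronglyMeasurable wy (volume.restrict (Omg v)))
    (iw : IntegrableOn (fun p => w p ^ 2) (OmgS Y v))
    (iwx : IntegrableOn (fun p => wx p ^ 2) (OmgS Y v))
    (iwy : IntegrableOn (fun p => wy p ^ 2) (OmgS Y v))
    (hc : 0 < c) (hD : IsWeakDeriv v w wx wy)
    (hE : ∀ φ : ℝ × ℝ → ℝ, ContDiff ℝ 1 φ → HasCompactSupport φ →
      (∫ p in Omg v, (c * b p.2 * wx p * φ p +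
        a p.2 * (wx p * fderiv ℝ φ p (1, 0) + wy p * fderiv ℝ φ p (0, 1)))) = 0)
    (ha : Measurable a) (haC : ∀ y, |a y| ≤ C) (hb : Measurable b) (hbC : ∀ y, |b y| ≤ C)
    (hb0 : ∀ y, 0 ≤ b y) (hη : ContDiff ℝ 1 η) (hηc : HasCompactSupport η)
    (hηM : ∀ p ∈ tsupport η, |p.2| < M - 1) (hη0 : ∀ y, 0 ≤ η (v y, y)) :
    Integrable (fun p => a p.2 * η p * (wx p ^ 2 + wy p ^ 2)
        + a p.2 * w p * (wx p * fderiv ℝ η p (1, 0) + wy p * fderiv ℝ η p (0, 1))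
        - c / 2 * b p.2 * w p ^ 2 * fderiv ℝ η p (1, 0)) (volume.restrict (Omg v)) ∧
      (∫ p in Omg v, (a p.2 * η p * (wx p ^ 2 + wy p ^ 2)
        + a p.2 * w p * (wx p * fderiv ℝ η p (1, 0) + wy p * fderiv ℝ η p (0, 1))
        - c / 2 * b p.2 * w p ^ 2 * fderiv ℝ η p (1, 0))) ≤ 0 := by
  have hS : MeasurableSet (Strip v M) := Strip_measurable hv.continuous M
  have hO : MeasurableSet (Omg v) := Omg_measurable hv.continuous
  -- for test functions supported in the strip, truncation does not change the integrals
  have hd : ∀ (f fe : ℝ × ℝ → ℝ) (e : ℝ × ℝ) (φ : ℝ × ℝ → ℝ), tsupport φ ⊆ Strip v M →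
      (∫ p in Omg v, f p * fderiv ℝ φ p e) = (-∫ p in Omg v, fe p * φ p) →
      (∫ p, (Strip v M).indicator f p * fderiv ℝ φ p e) =
        -∫ p, (Strip v M).indicator fe p * φ p := by
    intro f fe e φ hφs h
    rw [← integral_indicator hO, ← integral_indicator hO] at h
    have e1 : ∀ p, (Strip v M).indicator f p * fderiv ℝ φ p e =
        (Omg v).indicator (fun p => f p * fderiv ℝ φ p e) p := by
      intro p
      by_cases hp : p ∈ tsupport φ
      · have hp' := hφs hp
        have hp2 : p ∈ Omg v := hp'.1
        simp [Set.indicator_of_mem hp', Set.indicator_of_mem hp2]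
      · have : fderiv ℝ φ p = 0 := by
          by_contra h
          exact hp (support_fderiv_subset ℝ h)
        by_cases hq : p ∈ Omg v <;> simp [this, hq]
    have e2 : ∀ p, (Strip v M).indicator fe p * φ p =
        (Omg v).indicator (fun p => fe p * φ p) p := by
      intro p
      by_cases hp : p ∈ tsupport φ
      · have hp' := hφs hp
        have hp2 : p ∈ Omg v := hp'.1
        simp [Set.indicator_of_mem hp', Set.indicator_of_mem hp2]
      · have : φ p = 0 := image_eq_zero_of_notMem_tsupport hp
        by_cases hq : p ∈ Omg v <;> simp [this, hq]
    simp only [e1, e2, h]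
  have hsub : Strip v M ⊆ Omg v := fun p hp => hp.1
  have L : ∀ f : ℝ × ℝ → ℝ, PerY Y f → AEStronglyMeasurable f (volume.restrict (Omg v)) →
      IntegrableOn (fun p => f p ^ 2) (OmgS Y v) → MemLp ((Strip v M).indicator f) 2 volume :=
    fun f h1 h2 h3 => (memLp_indicator_iff_restrict hS).2 (memLp_Strip hY hvp h1 h2 h3 M)
  obtain ⟨r1, r2⟩ := energy (M := M) (C := C) (a := a) (b := b) hv (L w hw mw iw) (L wx hwx mwx iwx)
    (L wy hwy mwy iwy) hc
    (fun φ h1 h2 h3 => hd _ _ _ φ h3 (hD φ h1 h2 (h3.trans hsub)).1)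
    (fun φ h1 h2 h3 => hd _ _ _ φ h3 (hD φ h1 h2 (h3.trans hsub)).2)
    (fun φ h1 h2 h3 => by
      refine Eq.trans ?_ (hE φ h1 h2)
      refine setIntegral_congr_fun hO fun p hp => ?_
      by_cases hpt : p ∈ tsupport φ
      · have : p ∈ Strip v M := ⟨hp, h3 p hpt⟩
        simp only [Set.indicator_of_mem this]
      · have e1 : φ p = 0 := image_eq_zero_of_notMem_tsupport hpt
        have e2 : fderiv ℝ φ p = 0 := by
          by_contra h
          exact hpt (support_fderiv_subset ℝ h)
        simp [e1, e2])
    ha haC hb hbC hb0 hη hηc hηM hη0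
  have hc : ∀ p ∈ Omg v, a p.2 * η p * ((Strip v M).indicator wx p ^ 2
        + (Strip v M).indicator wy p ^ 2)
        + a p.2 * (Strip v M).indicator w p * ((Strip v M).indicator wx p * fderiv ℝ η p (1, 0)
          + (Strip v M).indicator wy p * fderiv ℝ η p (0, 1))
        - c / 2 * b p.2 * (Strip v M).indicator w p ^ 2 * fderiv ℝ η p (1, 0) =
      a p.2 * η p * (wx p ^ 2 + wy p ^ 2)
        + a p.2 * w p * (wx p * fderiv ℝ η p (1, 0) + wy p * fderiv ℝ η p (0, 1))
        - c / 2 * b p.2 * w p ^ 2 * fderiv ℝ η p (1, 0) := by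
    intro p hp
    by_cases hpt : p ∈ tsupport η
    · have : p ∈ Strip v M := ⟨hp, by linarith [hηM p hpt]⟩
      simp only [Set.indicator_of_mem this]
    · have e1 : η p = 0 := image_eq_zero_of_notMem_tsupport hpt
      have e2 : fderiv ℝ η p = 0 := by
        by_contra h
        exact hpt (support_fderiv_subset ℝ h)
      simp [e1, e2]
  refine ⟨IntegrableOn.congr_fun r1 hc hO, ?_⟩
  rw [← setIntegral_congr_fun hO hc]
  exact r2

end Periodic

/-- The pointwise inequality behind the weighted estimate: with `δ = c bm / (2 aM)` the exponential
weight makes the quadratic form coercive, up to the terms `α`, `β` containing derivatives of the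
cutoff `s`. -/
lemma form_lower_bound {a b c aM bm bM δ e s w wx wy α β ε : ℝ} (ha0 : 0 ≤ a) (ha : a ≤ aM)
    (haM : 0 < aM) (hbm : 0 ≤ bm) (hb0 : bm ≤ b) (hb : b ≤ bM) (hc : 0 < c)
    (hδ : δ = c * bm / (2 * aM)) (he : 0 ≤ e) (he1 : e ≤ 1) (hs : 0 ≤ s)
    (hα : |α| ≤ ε) (hβ : |β| ≤ ε) :
    δ * c * bm / 4 * (s * (e * w ^ 2)) - ε * (aM + c * bM) * (w ^ 2 + wx ^ 2 + wy ^ 2) ≤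
      a * ((2 - e) * s) * (wx ^ 2 + wy ^ 2) + a * w * (wx * (-(δ * e * s) + α) + wy * β)
        - c / 2 * b * w ^ 2 * (-(δ * e * s) + α) := by
  have hδ0 : 0 ≤ δ := by rw [hδ]; positivity
  have hδa : aM * δ = c * bm / 2 := by rw [hδ]; field_simp
  have hε : 0 ≤ ε := (abs_nonneg _).trans hα
  have hbM : 0 ≤ bM := hbm.trans (hb0.trans hb)
  -- cutoff errors
  have e1 : -(ε * (aM * ((w ^ 2 + wx ^ 2) / 2))) ≤ a * w * (wx * α) := by
    have h1 : |w * wx| ≤ (w ^ 2 + wx ^ 2) / 2 := by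
      rw [abs_le]; constructor <;> nlinarith [sq_nonneg (w + wx), sq_nonneg (w - wx)]
    have h2 : |a * w * (wx * α)| ≤ ε * (aM * ((w ^ 2 + wx ^ 2) / 2)) := by
      have : a * w * (wx * α) = α * (a * (w * wx)) := by ring
      rw [this, abs_mul, abs_mul, abs_of_nonneg ha0]
      gcongr
    exact (abs_le.1 h2).1
  have e2 : -(ε * (aM * ((w ^ 2 + wy ^ 2) / 2))) ≤ a * w * (wy * β) := by
    have h1 : |w * wy| ≤ (w ^ 2 + wy ^ 2) / 2 := by
      rw [abs_le]; constructor <;> nlinarith [sq_nonneg (w + wy), sq_nonneg (w - wy)]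
    have h2 : |a * w * (wy * β)| ≤ ε * (aM * ((w ^ 2 + wy ^ 2) / 2)) := by
      have : a * w * (wy * β) = β * (a * (w * wy)) := by ring
      rw [this, abs_mul, abs_mul, abs_of_nonneg ha0]
      gcongr
    exact (abs_le.1 h2).1
  have e3 : c / 2 * b * w ^ 2 * α ≤ ε * (c / 2 * bM * w ^ 2) := by
    have h2 : |c / 2 * b * w ^ 2 * α| ≤ ε * (c / 2 * bM * w ^ 2) := by
      have hb' : 0 ≤ b := hbm.trans hb0
      rw [abs_mul, abs_of_nonneg (by positivity), mul_comm]
      gcongr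
    exact (abs_le.1 h2).2
  -- coercive part
  have m1 : a * w * wx * (δ * e) ≤ a / 2 * wx ^ 2 + aM / 2 * δ ^ 2 * e * w ^ 2 := by
    have h1 : a * w * wx * (δ * e) ≤ a / 2 * wx ^ 2 + a / 2 * (δ ^ 2 * e ^ 2 * w ^ 2) := by
      nlinarith [mul_nonneg ha0 (sq_nonneg (wx - δ * e * w))]
    have h2 : a / 2 * (δ ^ 2 * e ^ 2 * w ^ 2) ≤ aM / 2 * (δ ^ 2 * (e * 1) * w ^ 2) := by
      rw [pow_two e]
      gcongr
    linarith
  have m2 : c / 2 * bm * (δ * e * w ^ 2) ≤ c / 2 * b * (δ * e * w ^ 2) := by gcongr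
  have m3 : aM / 2 * δ ^ 2 * e * w ^ 2 = c * bm / 4 * δ * (e * w ^ 2) := by
    calc _ = (aM * δ) / 2 * δ * (e * w ^ 2) := by ring
      _ = _ := by rw [hδa]; ring
  have m4 : a * (wx ^ 2 + wy ^ 2) ≤ a * (2 - e) * (wx ^ 2 + wy ^ 2) := by
    have : a * 1 ≤ a * (2 - e) := by gcongr; linarith
    have h : 0 ≤ wx ^ 2 + wy ^ 2 := by positivity
    simpa only [mul_one] using mul_le_mul_of_nonneg_right this h
  have m5 : δ * c * bm / 4 * (e * w ^ 2) ≤ a * (2 - e) * (wx ^ 2 + wy ^ 2)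
      - a * w * wx * (δ * e) + c / 2 * b * (δ * e * w ^ 2) := by
    have h1 : 0 ≤ a * wx ^ 2 := by positivity
    have h2 : 0 ≤ a * wy ^ 2 := by positivity
    linarith
  have m6 := mul_le_mul_of_nonneg_left m5 hs
  have e4 : ε * (aM * ((w ^ 2 + wx ^ 2) / 2)) + ε * (aM * ((w ^ 2 + wy ^ 2) / 2))
      + ε * (c / 2 * bM * w ^ 2) ≤ ε * (aM + c * bM) * (w ^ 2 + wx ^ 2 + wy ^ 2) := by
    have h1 : 0 ≤ ε * aM * wx ^ 2 := by positivity
    have h2 : 0 ≤ ε * aM * wy ^ 2 := by positivity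
    have h3 : 0 ≤ ε * (c * bM) * wx ^ 2 := by positivity
    have h4 : 0 ≤ ε * (c * bM) * wy ^ 2 := by positivity
    have h5 : 0 ≤ ε * (c * bM) * w ^ 2 := by positivity
    linarith
  linarith

/-! ### The homogeneous problem -/

/-- The weight `η = (2 - exp (δ (x - V))) s`, where `s` is a cutoff at scale `R`; the constant `C₀`
does not depend on `R`. -/
lemma exists_weight (δ V : ℝ) (hδ : 0 ≤ δ) : ∃ C₀ : ℝ, 0 ≤ C₀ ∧ ∀ R : ℝ, 0 < R →
    ∃ s η : ℝ × ℝ → ℝ, (∀ p, η p = (2 - exp (δ * (p.1 - V))) * s p) ∧ (∀ p, 0 ≤ s p) ∧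
      (∀ p : ℝ × ℝ, |p.1| ≤ R → |p.2| ≤ R → s p = 1) ∧
      ContDiff ℝ 1 η ∧ HasCompactSupport η ∧ (∀ p ∈ tsupport η, |p.2| ≤ 2 * R) ∧
      ∀ p : ℝ × ℝ, p.1 ≤ V → ∃ α β : ℝ,
        fderiv ℝ η p (1, 0) = -(δ * exp (δ * (p.1 - V)) * s p) + α ∧ fderiv ℝ η p (0, 1) = β ∧
        |α| ≤ C₀ / R ∧ |β| ≤ C₀ / R := by
  let χ : ContDiffBump (0 : ℝ) := ⟨1, 2, one_pos, by norm_num⟩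
  have hχ : ContDiff ℝ 1 χ := χ.contDiff
  obtain ⟨C, hC⟩ := (hχ.continuous_deriv le_rfl).bounded_above_of_compact_support
    χ.hasCompactSupport.deriv
  have hC0 : 0 ≤ C := (norm_nonneg _).trans (hC 0)
  refine ⟨2 * C, by positivity, fun R hR => ?_⟩
  let η : ℝ × ℝ → ℝ := fun p => (2 - exp (δ * (p.1 - V))) * (χ (p.1 / R) * χ (p.2 / R))
  have hη : ContDiff ℝ 1 η := by
    have h1 : ContDiff ℝ 1 fun p : ℝ × ℝ => χ (p.1 / R) := hχ.comp (contDiff_fst.div_const R)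
    have h2 : ContDiff ℝ 1 fun p : ℝ × ℝ => χ (p.2 / R) := hχ.comp (contDiff_snd.div_const R)
    have h3 : ContDiff ℝ 1 fun p : ℝ × ℝ => 2 - exp (δ * (p.1 - V)) := by fun_prop
    exact h3.mul (h1.mul h2)
  have hz : ∀ t : ℝ, 2 * R < |t| → χ (t / R) = 0 := by
    intro t ht
    apply χ.zero_of_le_dist
    rw [Real.dist_eq, sub_zero, abs_div, abs_of_pos hR, le_div_iff₀ hR]
    exact ht.le
  have hs : Function.support η ⊆ Metric.closedBall 0 (2 * R) := by
    intro p hp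
    rw [mem_closedBall_zero_iff, Prod.norm_def, max_le_iff, Real.norm_eq_abs, Real.norm_eq_abs]
    constructor
    · by_contra! h
      exact hp (by simp [η, hz _ h])
    · by_contra! h
      exact hp (by simp [η, hz _ h])
  have hts : tsupport η ⊆ Metric.closedBall 0 (2 * R) := closure_minimal hs Metric.isClosed_closedBall
  refine ⟨fun p => χ (p.1 / R) * χ (p.2 / R), η, fun p => rfl,
    fun p => mul_nonneg χ.nonneg χ.nonneg, fun p h1 h2 => ?_, hη,
    (isCompact_closedBall (0 : ℝ × ℝ) (2 * R)).of_isClosed_subset (isClosed_tsupport η) hts,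
    fun p hp => ?_, fun p hp => ?_⟩
  · have h : ∀ t : ℝ, |t| ≤ R → χ (t / R) = 1 := fun t ht => by
      apply χ.one_of_mem_closedBall
      rw [mem_closedBall_zero_iff, Real.norm_eq_abs, abs_div, abs_of_pos hR, div_le_iff₀ hR]
      linarith
    simp [h _ h1, h _ h2]
  · exact (norm_snd_le p).trans (mem_closedBall_zero_iff.1 (hts hp))
  · have he : exp (δ * (p.1 - V)) ≤ 1 := exp_le_one_iff.2
      (mul_nonpos_of_nonneg_of_nonpos hδ (by linarith))
    have he0 := exp_pos (δ * (p.1 - V))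
    have hdχ : ∀ t : ℝ, HasDerivAt (fun t => χ (t / R)) (deriv χ (t / R) * (1 / R)) t := fun t =>
      HasDerivAt.comp (h₂ := (χ : ℝ → ℝ)) (h := fun t : ℝ => t / R) t
        (hχ.differentiable one_ne_zero (t / R)).hasDerivAt ((hasDerivAt_id t).div_const R)
    have hdη := (hη.differentiable one_ne_zero p).hasFDerivAt
    have d1 : fderiv ℝ η p (1, 0) = -(exp (δ * (p.1 - V)) * δ) * (χ (p.1 / R) * χ (p.2 / R))
        + (2 - exp (δ * (p.1 - V))) * (deriv χ (p.1 / R) * (1 / R) * χ (p.2 / R)) := by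
      have k1 : HasDerivAt (fun x => η (x, p.2)) (fderiv ℝ η p (1, 0)) p.1 :=
        HasFDerivAt.comp_hasDerivAt (f := fun x : ℝ => (x, p.2)) p.1 hdη
          ((hasDerivAt_id p.1).prodMk (hasDerivAt_const _ _))
      have k2 : HasDerivAt (fun x => 2 - exp (δ * (x - V))) (-(exp (δ * (p.1 - V)) * δ)) p.1 := by
        have := ((((hasDerivAt_id p.1).sub_const V).const_mul δ).exp).const_sub 2
        simpa using this
      exact k1.unique (k2.mul ((hdχ p.1).mul_const (χ (p.2 / R))))
    have d2 : fderiv ℝ η p (0, 1) = (2 - exp (δ * (p.1 - V))) *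
        (χ (p.1 / R) * (deriv χ (p.2 / R) * (1 / R))) := by
      have k1 : HasDerivAt (fun y => η (p.1, y)) (fderiv ℝ η p (0, 1)) p.2 :=
        HasFDerivAt.comp_hasDerivAt (f := fun y : ℝ => (p.1, y)) p.2 hdη
          ((hasDerivAt_const _ _).prodMk (hasDerivAt_id p.2))
      exact k1.unique (((hdχ p.2).const_mul (χ (p.1 / R))).const_mul (2 - exp (δ * (p.1 - V))))
    have b1 : ∀ x y : ℝ, |(2 - exp (δ * (p.1 - V))) * (deriv χ x * (1 / R) * χ y)|
        ≤ 2 * C / R := by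
      intro x y
      have : |deriv χ x| ≤ C := hC x
      rw [abs_mul, abs_mul, abs_mul, abs_of_nonneg (by linarith : 0 ≤ 2 - exp (δ * (p.1 - V))),
        abs_of_pos (one_div_pos.2 hR), abs_of_nonneg χ.nonneg]
      calc _ ≤ 2 * (C * (1 / R) * 1) := by
            have h1 : χ y ≤ 1 := χ.le_one
            have h0 : 0 ≤ χ y := χ.nonneg
            have h2 : 2 - exp (δ * (p.1 - V)) ≤ 2 := by linarith
            gcongr
        _ = _ := by ring
    refine ⟨_, _, ?_, d2, b1 (p.1 / R) (p.2 / R), ?_⟩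
    · rw [d1]; ring
    · have := b1 (p.2 / R) (p.1 / R)
      rwa [mul_comm (deriv χ (p.2 / R) * (1 / R))] at this

/-- Uniqueness for the homogeneous problem. Tested at scale `R = n Y`, the weighted mass of `w` over
`2 n` cells is controlled by the cutoff error, which is of size `1 / R` on `6 n` cells and hence
bounded; linear growth in `n` forces the mass of one cell to vanish. -/
lemma homogeneous_zero {w wx wy : ℝ × ℝ → ℝ} {a b v : ℝ → ℝ} {K : NNReal}
    {Y am aM bm bM c : ℝ}
    (hY : 0 < Y) (hv : LipschitzWith K v) (hvp : Function.Periodic v Y)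
    (hw : PerY Y w) (hwx : PerY Y wx) (hwy : PerY Y wy)
    (mw : AEStronglyMeasurable w (volume.restrict (Omg v)))
    (mwx : AEStronglyMeasurable wx (volume.restrict (Omg v)))
    (mwy : AEStronglyMeasurable wy (volume.restrict (Omg v)))
    (iw : IntegrableOn (fun p => w p ^ 2) (OmgS Y v))
    (iwx : IntegrableOn (fun p => wx p ^ 2) (OmgS Y v))
    (iwy : IntegrableOn (fun p => wy p ^ 2) (OmgS Y v))
    (hc : 0 < c) (hD : IsWeakDeriv v w wx wy)
    (hE : ∀ φ : ℝ × ℝ → ℝ, ContDiff ℝ 1 φ → HasCompactSupport φ →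
      (∫ p in Omg v, (c * b p.2 * wx p * φ p +
        a p.2 * (wx p * fderiv ℝ φ p (1, 0) + wy p * fderiv ℝ φ p (0, 1)))) = 0)
    (ha : Measurable a) (hb : Measurable b) (ham : 0 < am) (hbm : 0 < bm)
    (ha1 : ∀ y, am ≤ a y) (ha2 : ∀ y, a y ≤ aM) (hb1 : ∀ y, bm ≤ b y) (hb2 : ∀ y, b y ≤ bM) :
    ∀ᵐ p ∂(volume.restrict (Omg v)), w p = 0 := by
  have haM : 0 < aM := ham.trans_le ((ha1 0).trans (ha2 0))
  have hbM : 0 < bM := hbm.trans_le ((hb1 0).trans (hb2 0))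
  have hO := Omg_measurable hv.continuous
  obtain ⟨V, hV⟩ : ∃ V, ∀ y, v y ≤ V := by
    obtain ⟨V, hV⟩ := (hvp.compact_of_continuous hY.ne' hv.continuous).bddAbove
    exact ⟨V, fun y => hV ⟨y, rfl⟩⟩
  obtain ⟨δ, hδ⟩ : ∃ δ, δ = c * bm / (2 * aM) := ⟨_, rfl⟩
  have hδ0 : 0 < δ := by rw [hδ]; positivity
  obtain ⟨C₀, hC₀, hW⟩ := exists_weight δ V hδ0.le
  have hexp : ∀ p ∈ Omg v, exp (δ * (p.1 - V)) ≤ 1 := fun p hp => exp_le_one_iff.2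
    (mul_nonpos_of_nonneg_of_nonpos hδ0.le (by have := hV p.2; have : p.1 < v p.2 := hp; linarith))
  have hOS : MeasurableSet (OmgS Y v) := hO.inter
    ((measurableSet_lt (f := fun _ : ℝ × ℝ => (0 : ℝ)) (g := fun p : ℝ × ℝ => p.2)
      (by fun_prop) (by fun_prop)).inter
      (measurableSet_lt (f := fun p : ℝ × ℝ => p.2) (g := fun _ : ℝ × ℝ => Y)
        (by fun_prop) (by fun_prop)))
  -- the cutoff equals `1` only where `|x| ≤ R`, so the exponential is truncated to a fixed half-plane
  let k : ℕ → ℝ × ℝ → ℝ := fun m p =>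
    (Set.Ici (-(m : ℝ))).indicator (fun x => exp (δ * (x - V))) p.1
  have hkm : ∀ m, Measurable (k m) := fun m => by
    have h1 : Measurable fun x => exp (δ * (x - V)) := by fun_prop
    exact (h1.indicator measurableSet_Ici).comp measurable_fst
  have hk0 : ∀ m p, 0 ≤ k m p := fun m p => Set.indicator_nonneg (fun x _ => (exp_pos _).le) _
  have hk1 : ∀ m p, k m p ≤ exp (δ * (p.1 - V)) := fun m p =>
    Set.indicator_le_self' (fun x _ => (exp_pos _).le) _
  -- the weighted mass of the difference in one cell, to the right of `x = -m`, vanishes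
  have main : ∀ m : ℕ, ∫ p in OmgS Y v, k m p * w p ^ 2 = 0 := by
    intro m
    have iF : IntegrableOn (fun p => k m p * w p ^ 2) (OmgS Y v) :=
      integrableOn_bdd (C := 1) hOS (hkm m)
        (fun p hp => by rw [abs_of_nonneg (hk0 m p)]; exact (hk1 m p).trans (hexp p hp.1)) iw
    have pF : PerY Y (fun p => k m p * w p ^ 2) := fun x y => by simp only [k, hw x y]
    have iQ : IntegrableOn (fun p => w p ^ 2 + wx p ^ 2 + wy p ^ 2) (OmgS Y v) :=
      (iw.add iwx).add iwy
    have pQ : PerY Y (fun p => w p ^ 2 + wx p ^ 2 + wy p ^ 2) := fun x y => by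
      simp only [hw x y, hwx x y, hwy x y]
    set I := ∫ p in OmgS Y v, k m p * w p ^ 2 with hI
    set J := ∫ p in OmgS Y v, (w p ^ 2 + wx p ^ 2 + wy p ^ 2) with hJ
    have hI0 : 0 ≤ I := integral_nonneg fun p => mul_nonneg (hk0 m p) (sq_nonneg _)
    obtain ⟨κ, hκ⟩ : ∃ κ, κ = δ * c * bm / 4 := ⟨_, rfl⟩
    have hκ0 : 0 < κ := by rw [hκ]; positivity
    have est : ∀ n : ℕ, 0 < n → (m : ℝ) ≤ n * Y → V ≤ n * Y →
        κ * (2 * n * I) ≤ C₀ / (n * Y) * (aM + c * bM) * (2 * (3 * n : ℕ) * J) := by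
      intro n hn hmn hVn
      have hR : 0 < n * Y := by positivity
      obtain ⟨s, η, h1, h2, h3, h4, h5, h6, h7⟩ := hW (n * Y) hR
      obtain ⟨g1, g2⟩ := energy_periodic (M := 2 * (n * Y) + 2) (C := max aM bM) (a := a) (b := b)
        hY hv hvp hw hwx hwy mw mwx mwy iw iwx iwy hc hD hE ha
        (fun y => by rw [abs_of_pos (ham.trans_le (ha1 y))]; exact (ha2 y).trans (le_max_left _ _))
        hb
        (fun y => by rw [abs_of_pos (hbm.trans_le (hb1 y))]; exact (hb2 y).trans (le_max_right _ _))
        (fun y => hbm.le.trans (hb1 y)) h4 h5 (fun p hp => by linarith [h6 p hp])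
        (fun y => by
          rw [h1]
          refine mul_nonneg ?_ (h2 _)
          have : exp (δ * (v y - V)) ≤ 1 := exp_le_one_iff.2
            (mul_nonpos_of_nonneg_of_nonpos hδ0.le (by linarith [hV y]))
          linarith)
      have hB1 := Box_measurable (Y := Y) hv.continuous n
      have hB3 := Box_measurable (Y := Y) hv.continuous (3 * n)
      have iB1 := integrableOn_Box hY hvp pF iF n
      have iB3 := integrableOn_Box hY hvp pQ iQ (3 * n)
      have j1 : Integrable ((Box Y v n).indicator fun p => k m p * w p ^ 2)
          (volume.restrict (Omg v)) := (iB1.integrable_indicator hB1).restrict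
      have j3 : Integrable ((Box Y v (3 * n)).indicator fun p => w p ^ 2 + wx p ^ 2 + wy p ^ 2)
          (volume.restrict (Omg v)) := (iB3.integrable_indicator hB3).restrict
      have e1 : ∫ p in Omg v, (Box Y v n).indicator (fun p => k m p * w p ^ 2) p = 2 * n * I := by
        rw [setIntegral_indicator hB1, Set.inter_eq_right.2 (Box_subset n),
          integral_Box hY hv.continuous hvp pF iF n]
      have e3 : ∫ p in Omg v, (Box Y v (3 * n)).indicator
          (fun p => w p ^ 2 + wx p ^ 2 + wy p ^ 2) p = 2 * (3 * n : ℕ) * J := by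
        rw [setIntegral_indicator hB3, Set.inter_eq_right.2 (Box_subset _),
          integral_Box hY hv.continuous hvp pQ iQ (3 * n)]
      rw [← e1, ← e3, ← integral_const_mul, ← integral_const_mul, ← sub_nonpos,
        ← integral_sub (j1.const_mul _) (j3.const_mul _)]
      refine le_trans (setIntegral_mono_on ((j1.const_mul _).sub (j3.const_mul _)) g1 hO
        fun p hp => ?_) g2
      have hpO : p.1 < v p.2 := hp
      have hpV : p.1 ≤ V := hpO.le.trans (hV p.2)
      -- the support of `η` lies in `|y| ≤ 2 R`, hence in `6 n` half-open cells
      by_cases hp3 : p ∈ Box Y v (3 * n)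
      · obtain ⟨α, β, d1, d2, b1, b2⟩ := h7 p hpV
        rw [Set.indicator_of_mem hp3, d1, d2, h1 p]
        refine le_trans (sub_le_sub_right ?_ _) (form_lower_bound (bm := bm) (bM := bM)
          (ham.le.trans (ha1 p.2)) (ha2 p.2) haM hbm.le (hb1 p.2) (hb2 p.2) hc hδ (exp_pos _).le
          (hexp p hp) (h2 p) b1 b2)
        rw [← hκ]
        refine mul_le_mul_of_nonneg_left ?_ hκ0.le
        by_cases hp1 : p ∈ Box Y v n
        · rw [Set.indicator_of_mem hp1]
          by_cases hpm : -(m : ℝ) ≤ p.1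
          · rw [h3 p (abs_le.2 ⟨by linarith, by linarith⟩) (abs_le.2 ⟨hp1.2.1, hp1.2.2.le⟩), one_mul]
            exact mul_le_mul_of_nonneg_right (hk1 m p) (sq_nonneg _)
          · have : k m p = 0 := Set.indicator_of_notMem (by simpa using hpm) _
            rw [this, zero_mul]
            exact mul_nonneg (h2 p) (mul_nonneg (exp_pos _).le (sq_nonneg _))
        · rw [Set.indicator_of_notMem hp1]
          exact mul_nonneg (h2 p) (mul_nonneg (exp_pos _).le (sq_nonneg _))
      · have hp1 : p ∉ Box Y v n := fun h => hp3 (by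
          obtain ⟨q1, q2, q3⟩ := h
          refine ⟨q1, ?_, ?_⟩ <;> push_cast <;> linarith)
        have hpt : p ∉ tsupport η := fun h => hp3 (by
          have := abs_le.1 (h6 p h)
          refine ⟨hp, ?_, ?_⟩ <;> push_cast <;> linarith)
        have z1 : η p = 0 := image_eq_zero_of_notMem_tsupport hpt
        have z2 : fderiv ℝ η p = 0 := by
          by_contra h
          exact hpt (support_fderiv_subset ℝ h)
        simp [Set.indicator_of_notMem hp1, Set.indicator_of_notMem hp3, z1, z2]
    have bound : ∀ n : ℕ, 0 < n → (m : ℝ) ≤ n * Y → V ≤ n * Y →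
        n * (κ * I) ≤ C₀ / Y * (aM + c * bM) * (3 * J) := by
      intro n hn h1 h2
      have hn' : (0 : ℝ) < n := by exact_mod_cast hn
      have := est n hn h1 h2
      push_cast at this
      have e : C₀ / (n * Y) * (aM + c * bM) * (2 * (3 * n) * J) =
          2 * (C₀ / Y * (aM + c * bM) * (3 * J)) := by
        field_simp
      rw [e] at this
      linarith
    by_contra hne
    have hpos : 0 < κ * I := mul_pos hκ0 (lt_of_le_of_ne hI0 (Ne.symm hne))
    obtain ⟨n, hn⟩ := exists_nat_gt (max (max (m / Y) (V / Y))
      (max 0 ((C₀ / Y * (aM + c * bM) * (3 * J)) / (κ * I))))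
    simp only [max_lt_iff, div_lt_iff₀ hY, div_lt_iff₀ hpos] at hn
    have := bound n (by exact_mod_cast hn.2.1) hn.1.1.le hn.1.2.le
    linarith [hn.2.2]
  apply ae_zero_of_cell hY hv.continuous hvp hw iw
  have h1 : ∀ m : ℕ, ∀ᵐ p ∂(volume.restrict (OmgS Y v)), k m p * w p ^ 2 = 0 := by
    intro m
    have iF : IntegrableOn (fun p => k m p * w p ^ 2) (OmgS Y v) :=
      integrableOn_bdd (C := 1) hOS (hkm m)
        (fun p hp => by rw [abs_of_nonneg (hk0 m p)]; exact (hk1 m p).trans (hexp p hp.1)) iw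
    exact (integral_eq_zero_iff_of_nonneg
      (fun p => mul_nonneg (hk0 m p) (sq_nonneg _)) iF).1 (main m)
  filter_upwards [ae_all_iff.2 h1] with p hp
  obtain ⟨m, hm⟩ := exists_nat_ge (-p.1)
  have e : k m p = exp (δ * (p.1 - V)) :=
    Set.indicator_of_mem (by rw [Set.mem_Ici]; linarith) _
  have := hp m
  rw [e] at this
  simpa [(exp_pos _).ne'] using this

/-! ### Difference of two solutions -/

/-- Values outside the a.e. range may be clamped, so that the bounds hold everywhere. -/
lemma exists_clamp {a : ℝ → ℝ} {l m : ℝ} (ha : Measurable a) (h : ∀ᵐ y : ℝ, l ≤ a y ∧ a y ≤ m) :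
    ∃ a' : ℝ → ℝ, Measurable a' ∧ a =ᵐ[volume] a' ∧ (∀ y, l ≤ a' y) ∧ ∀ y, a' y ≤ m := by
  have hlm : l ≤ m := by
    obtain ⟨y, hy⟩ := h.exists
    exact hy.1.trans hy.2
  refine ⟨fun y => max l (min (a y) m), measurable_const.max (ha.min measurable_const), ?_,
    fun y => le_max_left _ _, fun y => max_le hlm (min_le_right _ _)⟩
  filter_upwards [h] with y hy
  rw [min_eq_left hy.2, max_eq_right hy.1]

lemma integrable_sq_sub {f g : ℝ × ℝ → ℝ} {S T : Set (ℝ × ℝ)} (hST : S ⊆ T)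
    (mf : AEStronglyMeasurable f (volume.restrict T))
    (mg : AEStronglyMeasurable g (volume.restrict T))
    (hf : IntegrableOn (fun p => f p ^ 2) S) (hg : IntegrableOn (fun p => g p ^ 2) S) :
    IntegrableOn (fun p => (f p - g p) ^ 2) S := by
  have mf' := mf.mono_measure (Measure.restrict_mono_set volume hST)
  have mg' := mg.mono_measure (Measure.restrict_mono_set volume hST)
  exact (((memLp_two_iff_integrable_sq mf').2 hf).sub
    ((memLp_two_iff_integrable_sq mg').2 hg)).integrable_sq

/-- Uniqueness of the variational solution of the temperature problem:
two variational solutions agree almost everywhere on the fresh region `Ω`. -/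
theorem temperature_uniqueness (Y am aM bm bM gm gM c : ℝ) (a b g v : ℝ → ℝ)
    (u₁ u₂ : ℝ × ℝ → ℝ)
    (hY : 0 < Y)
    (hameas : Measurable a) (hbmeas : Measurable b) (hgmeas : Measurable g)
    (haper : Function.Periodic a Y) (hbper : Function.Periodic b Y)
    (hgper : Function.Periodic g Y)
    (ham : 0 < am) (hbm : 0 < bm) (hgm : 0 < gm)
    (ha : ∀ᵐ y : ℝ, am ≤ a y ∧ a y ≤ aM)
    (hb : ∀ᵐ y : ℝ, bm ≤ b y ∧ b y ≤ bM)
    (hg : ∀ᵐ y : ℝ, gm ≤ g y ∧ g y ≤ gM)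
    (hc : 0 < c) (hvlip : ∃ K, LipschitzWith K v) (hvper : Function.Periodic v Y)
    (hu₁ : IsVarSol Y a b g c v u₁) (hu₂ : IsVarSol Y a b g c v u₂) :
    ∀ᵐ p ∂(volume.restrict (Omg v)), u₁ p = u₂ p := by
  obtain ⟨K, hv⟩ := hvlip
  obtain ⟨a', ma, ea, ha1, ha2⟩ := exists_clamp hameas ha
  obtain ⟨b', mb, eb, hb1, hb2⟩ := exists_clamp hbmeas hb
  obtain ⟨g', mg, eg, hg1, hg2⟩ := exists_clamp hgmeas hg
  obtain ⟨ux, uy, hu⟩ := hu₁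
  obtain ⟨wx, wy, hw⟩ := hu₂
  replace hu := hu.congr_coeff ea eb eg
  replace hw := hw.congr_coeff ea eb eg
  obtain ⟨mu, mux, muy⟩ := hu.aesm hv.continuous ma mb mg hc ham ha1 hbm hb1 hgm hg1 hg2
  obtain ⟨mw, mwx, mwy⟩ := hw.aesm hv.continuous ma mb mg hc ham ha1 hbm hb1 hgm hg1 hg2
  have hsub : OmgS Y v ⊆ Omg v := fun p hp => hp.1
  -- integrability of both forms is needed to split the integral of their difference
  have iu := fun φ h1 h2 => hu.integrable_form (φ := φ) hv.continuous mg hc hgm hg1 hg2 h1 h2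
  have iw := fun φ h1 h2 => hw.integrable_form (φ := φ) hv.continuous mg hc hgm hg1 hg2 h1 h2
  obtain ⟨p1, p2, p3, s1, s2, s3, D, E⟩ := hu
  obtain ⟨q1, q2, q3, t1, t2, t3, D', E'⟩ := hw
  have hper : ∀ f g : ℝ × ℝ → ℝ, PerY Y f → PerY Y g → PerY Y (fun p => f p - g p) :=
    fun f g hf hg x y => by simp only [hf x y, hg x y]
  -- the source terms cancel, so the difference solves the homogeneous problem
  have key := homogeneous_zero (w := fun p => u₁ p - u₂ p) (wx := fun p => ux p - wx p)
    (wy := fun p => uy p - wy p) (a := a') (b := b') hY hv hvper (hper _ _ p1 q1) (hper _ _ p2 q2)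
    (hper _ _ p3 q3) (mu.sub mw) (mux.sub mwx) (muy.sub mwy) (integrable_sq_sub hsub mu mw s1 t1)
    (integrable_sq_sub hsub mux mwx s2 t2) (integrable_sq_sub hsub muy mwy s3 t3) hc
    (fun φ h1 h2 h3 => ?_) (fun φ h1 h2 => ?_) ma mb ham hbm ha1 ha2 hb1 hb2
  · filter_upwards [key] with p hp using sub_eq_zero.1 hp
  · have hφ : Continuous φ := h1.continuous
    have hd : ∀ e, Continuous fun p => fderiv ℝ φ p e := fun e =>
      (h1.continuous_fderiv (by simp)).clm_apply continuous_const
    have hdc : ∀ e, HasCompactSupport fun p => fderiv ℝ φ p e := fun e => h2.fderiv_apply ℝ e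
    have I := fun {F ψ : ℝ × ℝ → ℝ} (hF : PerY Y F) m i hψ hψc =>
      integrable_mul_test (F := F) (ψ := ψ) hY hv.continuous hvper hF m i hψ hψc
    simp only [sub_mul]
    rw [integral_sub (I p1 mu s1 (hd _) (hdc _)) (I q1 mw t1 (hd _) (hdc _)),
      integral_sub (I p2 mux s2 hφ h2) (I q2 mwx t2 hφ h2),
      integral_sub (I p1 mu s1 (hd _) (hdc _)) (I q1 mw t1 (hd _) (hdc _)),
      integral_sub (I p3 muy s3 hφ h2) (I q3 mwy t3 hφ h2),
      (D φ h1 h2 h3).1, (D φ h1 h2 h3).2, (D' φ h1 h2 h3).1, (D' φ h1 h2 h3).2]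
    constructor <;> ring
  · refine Eq.trans ?_ (sub_eq_zero.2 ((E φ h1 h2).trans (E' φ h1 h2).symm))
    rw [← integral_sub (iu φ h1 h2) (iw φ h1 h2)]
    congr 1
    ext p
    ring
end
end
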